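/- Let 𝔾 be a discrete quantum group of Kac type and let E be a conditional expectation of B(L²(𝔾)) onto L∞(𝔾̂). Then m := φ̂ ∘ E|_{L∞(𝔾)} is a left-invariant mean on L∞(𝔾), where φ̂ is the (tracial) Haar state of the compact dual 𝔾̂. -/

import Mathlib

/-!
Common framework: an axiomatization of locally compact quantum groups (in the von Neumann
algebraic setting of Kustermans–Vaes) acting on a Hilbert space `H = L²(𝔾)`.

Since completed Hilbert space tensor products are not available, the tensor square
`H2 = L²(𝔾) ⊗ L²(𝔾)` is axiomatized: a Hilbert space together with a bilinear map
`tmul` with total range satisfying `⟪a ⊗ b, c ⊗ d⟫ = ⟪a, c⟫⟪b, d⟫`, the induced tensor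
product of operators `tensorOp`, tensor products `funcTensor` of normal functionals,
and the slice maps `sliceL = ω ⊗ id`, `sliceR = id ⊗ ω`.

Normal functionals (elements of the predual `B(H)_*`) are characterized concretely:
`ω(x) = ∑ ⟪ηₙ, x ξₙ⟫` with `∑‖ξₙ‖² , ∑‖ηₙ‖² < ∞`.

Membership of an operator `X` on `H2` in a spatial tensor product `P ⊗̄ Q` of von Neumann
algebras is encoded, via the commutation theorem, as: `X` commutes with all `a' ⊗ b'`
with `a' ∈ P'`, `b' ∈ Q'`.

A locally compact quantum group is recorded through its left regular co-representation
`W ∈ L∞(𝔾) ⊗̄ L∞(𝔾̂)` and right regular co-representation `V ∈ L∞(𝔾̂)' ⊗̄ L∞(𝔾)`,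
which implement the co-multiplication: `Δ(x) = W*(1 ⊗ x)W = V(x ⊗ 1)V*` for `x ∈ L∞(𝔾)`;
`Δ̄(x) := W*(1 ⊗ x)W` for arbitrary `x ∈ B(H)` is the canonical normal extension of `Δ`.
-/

noncomputable section

open scoped ComplexOrder ComplexInnerProductSpace

namespace LCQGNote

/-- The bounded operators `B(H)`. -/
abbrev B (H : Type*) [NormedAddCommGroup H] [InnerProductSpace ℂ H] : Type _ := H →L[ℂ] H

variable (H H2 : Type*)
  [NormedAddCommGroup H] [InnerProductSpace ℂ H] [CompleteSpace H]
  [NormedAddCommGroup H2] [InnerProductSpace ℂ H2] [CompleteSpace H2]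

/-- The vector functional `ω_{ξ,η} : x ↦ ⟨x ξ, η⟩` on `B(H)` (written here in the
Mathlib convention for inner products, which are conjugate-linear in the first slot). -/
def vecFunctional (ξ η : H) : B H →ₗ[ℂ] ℂ where
  toFun x := ⟪η, x ξ⟫
  map_add' x y := by simp [inner_add_right]
  map_smul' c x := by simp [inner_smul_right]

/-- A functional on `B(H)` is normal (σ-weakly continuous, i.e. belongs to the predual
`B(H)_*`) iff it has the form `x ↦ ∑ ⟪ηₙ, x ξₙ⟫` with `(ξₙ), (ηₙ)` square-summable. -/
def IsNormalFunctional (ω : B H →ₗ[ℂ] ℂ) : Prop :=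
  ∃ ξ η : ℕ → H, Summable (fun n => ‖ξ n‖ ^ 2) ∧ Summable (fun n => ‖η n‖ ^ 2) ∧
    ∀ x : B H, HasSum (fun n => ⟪η n, x (ξ n)⟫) (ω x)

/-- `φ` is a state of the von Neumann algebra `N ⊆ B(H)`: it is unital and positive on `N`.
(Functionals on `N` are encoded as functionals on `B(H)`; only the restriction to `N`
matters, by the Hahn–Banach extension theorem.) -/
def IsStateOn (N : VonNeumannAlgebra H) (φ : B H →ₗ[ℂ] ℂ) : Prop :=
  φ 1 = 1 ∧ ∀ x : B H, x ∈ N → x.IsPositive → 0 ≤ φ x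

/-- A conditional expectation of `B(H)` onto a von Neumann subalgebra `N`:
a unital positive projection `E : B(H) → B(H)` with range `N`. -/
structure IsConditionalExpectation (N : VonNeumannAlgebra H) (E : B H →ₗ[ℂ] B H) : Prop where
  unital : E 1 = 1
  positive : ∀ x : B H, x.IsPositive → (E x).IsPositive
  mem_range : ∀ x : B H, E x ∈ N
  fixes : ∀ x ∈ N, E x = x

/-- The center of a von Neumann algebra `N`: elements of `N` commuting with all of `N`. -/
def center (N : VonNeumannAlgebra H) : Set (B H) := {z | z ∈ N ∧ ∀ y ∈ N, z * y = y * z}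

/-- A von Neumann algebra `N ⊆ B(H)` is injective if there is a conditional expectation
of `B(H)` onto `N`. -/
def IsInjectiveVNA (N : VonNeumannAlgebra H) : Prop :=
  ∃ E : B H →ₗ[ℂ] B H, IsConditionalExpectation H N E

/-- A locally compact quantum group `𝔾`, axiomatized over its Hilbert space `H = L²(𝔾)`
together with the tensor square `H2 = L²(𝔾) ⊗ L²(𝔾)`.  `M = L∞(𝔾)`, `Mhat = L∞(𝔾̂)`
(both acting canonically on `L²(𝔾)`). -/
structure LCQG where
  /-- `L∞(𝔾)` -/
  M : VonNeumannAlgebra H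
  /-- `L∞(𝔾̂)`, the dual von Neumann algebra, also acting on `L²(𝔾)` -/
  Mhat : VonNeumannAlgebra H
  /-- the tensor map `H × H → H2 = H ⊗ H` -/
  tmul : H →ₗ[ℂ] H →ₗ[ℂ] H2
  tmul_inner : ∀ a b c d : H, ⟪tmul a b, tmul c d⟫ = ⟪a, c⟫ * ⟪b, d⟫
  tmul_total : (Submodule.span ℂ {v : H2 | ∃ a b, v = tmul a b}).topologicalClosure = ⊤
  /-- the tensor product of operators: `tensorOp x y = x ⊗ y` on `H2` -/
  tensorOp : B H →ₗ[ℂ] B H →ₗ[ℂ] B H2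
  tensorOp_apply : ∀ (x y : B H) (a b : H), tensorOp x y (tmul a b) = tmul (x a) (y b)
  /-- the flip (tensor swap) unitary `Σ` on `H2` -/
  flipU : B H2
  flipU_apply : ∀ a b : H, flipU (tmul a b) = tmul b a
  /-- the tensor product `ω ⊗ ρ` of (normal) functionals -/
  funcTensor : (B H →ₗ[ℂ] ℂ) → (B H →ₗ[ℂ] ℂ) → (B H2 →ₗ[ℂ] ℂ)
  funcTensor_elem : ∀ ω ρ (x y : B H), funcTensor ω ρ (tensorOp x y) = ω x * ρ y
  funcTensor_normal : ∀ ω ρ, IsNormalFunctional H ω → IsNormalFunctional H ρ →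
    IsNormalFunctional H2 (funcTensor ω ρ)
  /-- the left slice map `sliceL ω = ω ⊗ id : B(H2) → B(H)` -/
  sliceL : (B H →ₗ[ℂ] ℂ) → B H2 →ₗ[ℂ] B H
  /-- the right slice map `sliceR ω = id ⊗ ω : B(H2) → B(H)` -/
  sliceR : (B H →ₗ[ℂ] ℂ) → B H2 →ₗ[ℂ] B H
  sliceL_char : ∀ ω X (ξ η : H),
    vecFunctional H ξ η (sliceL ω X) = funcTensor ω (vecFunctional H ξ η) X
  sliceR_char : ∀ ω X (ξ η : H),
    vecFunctional H ξ η (sliceR ω X) = funcTensor (vecFunctional H ξ η) ω X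
  /-- the left regular co-representation `W` -/
  W : B H2
  W_unitary_l : star W * W = 1
  W_unitary_r : W * star W = 1
  /-- `W ∈ L∞(𝔾) ⊗̄ L∞(𝔾̂)` (via the commutation theorem for tensor products) -/
  W_mem : ∀ a' ∈ M.commutant, ∀ b' ∈ Mhat.commutant, Commute W (tensorOp a' b')
  /-- the right regular co-representation `V` -/
  V : B H2
  V_unitary_l : star V * V = 1
  V_unitary_r : V * star V = 1
  /-- `V ∈ L∞(𝔾̂)' ⊗̄ L∞(𝔾)` (via the commutation theorem for tensor products) -/
  V_mem : ∀ a ∈ Mhat, ∀ b' ∈ M.commutant, Commute V (tensorOp a b')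
  /-- `Δ` maps `L∞(𝔾)` into `L∞(𝔾) ⊗̄ L∞(𝔾)` -/
  Delta_mem : ∀ x ∈ M, ∀ a' ∈ M.commutant, ∀ b' ∈ M.commutant,
    Commute (star W * tensorOp 1 x * W) (tensorOp a' b')
  /-- `V` also implements the co-multiplication: `Δ(x) = V(x ⊗ 1)V*` on `L∞(𝔾)` -/
  Delta_V : ∀ x ∈ M, star W * tensorOp 1 x * W = V * tensorOp x 1 * star V
  /-- slices of `Δ(x)`, `x ∈ L∞(𝔾)`, lie in `L∞(𝔾)` -/
  slice_Delta_mem : ∀ ω, ∀ x ∈ M, sliceL ω (star W * tensorOp 1 x * W) ∈ M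
  /-- slices `(ω ⊗ id)(V (x ⊗ 1) V*)` lie in `L∞(𝔾)`, since `V ∈ L∞(𝔾̂)' ⊗̄ L∞(𝔾)` -/
  sliceL_rConj_mem : ∀ ω (x : B H), sliceL ω (V * tensorOp x 1 * star V) ∈ M
  /-- the fixed-point characterization `L∞(𝔾̂) = {y : V(y ⊗ 1)V* = y ⊗ 1}`
  (cf. Kustermans–Vaes, proof of Proposition 4.2) -/
  fixedPoint_mem : ∀ y : B H, V * tensorOp y 1 * star V = tensorOp y 1 → y ∈ Mhat

namespace LCQG

variable {H H2} (Q : LCQG H H2)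

/-- The (extended) co-multiplication `Δ̄ : B(L²(𝔾)) → L∞(𝔾) ⊗̄ B(L²(𝔾))`,
`Δ̄(x) = W*(1 ⊗ x)W`; its restriction to `L∞(𝔾)` is the co-multiplication `Δ`. -/
def Delta (x : B H) : B H2 := star Q.W * Q.tensorOp 1 x * Q.W

/-- The map `x ↦ V (x ⊗ 1) V*` on `B(L²(𝔾))`. -/
def rConj : B H →ₗ[ℂ] B H2 where
  toFun x := Q.V * Q.tensorOp x 1 * star Q.V
  map_add' x y := by simp [mul_add, add_mul]
  map_smul' c x := by simp [mul_smul_comm, smul_mul_assoc]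

/-- The left regular co-representation of the dual: `Ŵ = Σ W* Σ` (i.e. `σ(W)*`). -/
def What : B H2 := Q.flipU * star Q.W * Q.flipU

/-- The (extended) co-multiplication of the dual quantum group, `Δ̂(y) = Ŵ*(1 ⊗ y)Ŵ`. -/
def Deltahat (y : B H) : B H2 := star Q.What * Q.tensorOp 1 y * Q.What

/-- `m` is a left-invariant mean on `L∞(𝔾)`: a state with
`m((ω ⊗ id)Δ(x)) = ω(1) m(x)` for all `x ∈ L∞(𝔾)` and normal `ω ∈ L¹(𝔾)`. -/
def IsLeftInvariantMean (m : B H →ₗ[ℂ] ℂ) : Prop :=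
  IsStateOn H Q.M m ∧
    ∀ x ∈ Q.M, ∀ ω : B H →ₗ[ℂ] ℂ, IsNormalFunctional H ω →
      m (Q.sliceL ω (Q.Delta x)) = ω 1 * m x

/-- `𝔾` is amenable if it admits a left-invariant mean. -/
def Amenable : Prop := ∃ m : B H →ₗ[ℂ] ℂ, Q.IsLeftInvariantMean m

/-- `𝔾` is quantum injective if there is a conditional expectation of `B(L²(𝔾))` onto
`L∞(𝔾)` mapping `L∞(𝔾̂)` into the center of `L∞(𝔾)`. -/
def QuantumInjective : Prop :=
  ∃ E : B H →ₗ[ℂ] B H, IsConditionalExpectation H Q.M E ∧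
    ∀ x ∈ Q.Mhat, E x ∈ center H Q.M

end LCQG

/-- A discrete quantum group `𝔾` of Kac type: a locally compact quantum group whose dual
`𝔾̂` is compact — i.e. it possesses a (bi-invariant, normal) Haar state `φ̂` on
`L∞(𝔾̂)` — such that `φ̂` is moreover a trace (Kac type).  The GNS construction of
`(L∞(𝔾̂), φ̂)` is canonically realized on `L²(𝔾)`, with GNS map `Λ = Λ_{φ̂}`. -/
structure DiscreteKacQG extends LCQG H H2 where
  /-- the Haar state `φ̂` of the compact dual `𝔾̂` -/
  phihat : B H →ₗ[ℂ] ℂ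
  phihat_state : IsStateOn H toLCQG.Mhat phihat
  phihat_normal : IsNormalFunctional H phihat
  /-- Kac type: the dual Haar state is a trace -/
  phihat_tracial : ∀ a ∈ toLCQG.Mhat, ∀ b ∈ toLCQG.Mhat, phihat (a * b) = phihat (b * a)
  /-- slices of `Δ̂(y)`, `y ∈ L∞(𝔾̂)`, lie in `L∞(𝔾̂)` -/
  slice_Deltahat_memL : ∀ ω, ∀ y ∈ toLCQG.Mhat, toLCQG.sliceL ω (toLCQG.Deltahat y) ∈ toLCQG.Mhat
  slice_Deltahat_memR : ∀ ω, ∀ y ∈ toLCQG.Mhat, toLCQG.sliceR ω (toLCQG.Deltahat y) ∈ toLCQG.Mhat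
  /-- left invariance of `φ̂`: `φ̂((ω ⊗ id)Δ̂(y)) = ω(1) φ̂(y)` -/
  phihat_left_inv : ∀ y ∈ toLCQG.Mhat, ∀ ω : B H →ₗ[ℂ] ℂ, IsNormalFunctional H ω →
    phihat (toLCQG.sliceL ω (toLCQG.Deltahat y)) = ω 1 * phihat y
  /-- right invariance of `φ̂`: `φ̂((id ⊗ ω)Δ̂(y)) = ω(1) φ̂(y)` -/
  phihat_right_inv : ∀ y ∈ toLCQG.Mhat, ∀ ω : B H →ₗ[ℂ] ℂ, IsNormalFunctional H ω →
    phihat (toLCQG.sliceR ω (toLCQG.Deltahat y)) = ω 1 * phihat y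
  /-- the GNS map `Λ_{φ̂} : L∞(𝔾̂) → L²(𝔾)` -/
  Lam : B H → H
  Lam_inner : ∀ a ∈ toLCQG.Mhat, ∀ b ∈ toLCQG.Mhat, ⟪Lam a, Lam b⟫ = phihat (star a * b)
  Lam_act : ∀ a ∈ toLCQG.Mhat, ∀ b ∈ toLCQG.Mhat, a (Lam b) = Lam (a * b)

/- A conditional expectation `E` onto `L∞(𝔾̂)` satisfies `φ̂(E(u* x u)) = φ̂(u* E(x) u)` for
`u ∈ L∞(𝔾̂)`, because positive unital projections respect Jordan products and `φ̂` is a trace.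
Expanding `(ω_k ⊗ id)Δ(x) = ∑ᵢ uᵢ* x uᵢ` over an orthonormal basis, where the matrix coefficients
`uᵢ = (ω_{k,eᵢ} ⊗ id)(W)` lie in `L∞(𝔾̂)`, reduces invariance to the orthogonality relation
`∑ᵢ φ̂(uᵢ* y uᵢ) = ‖k‖² φ̂(y)` for `y ∈ L∞(𝔾̂)`.  As `E` is only assumed positive, not normal, the
sum a priori gives just `‖k‖² φ̂(E(x)) ≤ φ̂(E((ω_k ⊗ id)Δ(x)))` for `x ≥ 0`; equality at `x = 1`
makes it an equality.  The orthogonality relation uses the pentagon equation for `W`, which is not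
part of the data; it is derived up to an isometry on the first leg, which the norms do not see. -/

/-- `K` presented as the completed Hilbert space tensor product of `H₁` and `H₂`.  Keeping the
space `K` abstract covers the given tensor square of an `LCQG` as well as its iterates. -/
structure HilbertTensor (H₁ H₂ K : Type*) [NormedAddCommGroup H₁] [InnerProductSpace ℂ H₁]
    [NormedAddCommGroup H₂] [InnerProductSpace ℂ H₂]
    [NormedAddCommGroup K] [InnerProductSpace ℂ K] where
  tmul : H₁ →ₗ[ℂ] H₂ →ₗ[ℂ] K
  inner_tmul : ∀ a b c d, ⟪tmul a b, tmul c d⟫ = ⟪a, c⟫ * ⟪b, d⟫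
  total : (Submodule.span ℂ {v : K | ∃ a b, v = tmul a b}).topologicalClosure = ⊤

namespace HilbertTensor

variable {H₁ H₂ K : Type*} [NormedAddCommGroup H₁] [InnerProductSpace ℂ H₁]
  [NormedAddCommGroup H₂] [InnerProductSpace ℂ H₂]
  [NormedAddCommGroup K] [InnerProductSpace ℂ K] (P : HilbertTensor H₁ H₂ K)

/-- The same Hilbert space, presented as the tensor product of `H₂` and `H₁`. -/
def swap : HilbertTensor H₂ H₁ K where
  tmul := P.tmul.flip
  inner_tmul a b c d := by simp [P.inner_tmul, mul_comm]
  total := by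
    simp only [LinearMap.flip_apply]
    rw [← P.total]
    congr! 4
    exact exists_comm

@[simp] lemma swap_tmul (a : H₁) (b : H₂) : P.swap.tmul b a = P.tmul a b := rfl

lemma norm_tmul (a : H₁) (b : H₂) : ‖P.tmul a b‖ = ‖a‖ * ‖b‖ := by
  have h := P.inner_tmul a b a b
  simp only [inner_self_eq_norm_sq_to_K] at h
  refine (sq_eq_sq₀ (norm_nonneg _) (by positivity)).1 ?_
  rw [mul_pow]
  exact_mod_cast h

/-- Dirac's `|a⟩ ⊗ 1`, the operator `b ↦ a ⊗ b`, as a function of `a`. -/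
def ket : H₁ →L[ℂ] H₂ →L[ℂ] K :=
  P.tmul.mkContinuous₂ 1 fun a b => by rw [P.norm_tmul, one_mul]

@[simp] lemma ket_apply (a : H₁) (b : H₂) : P.ket a b = P.tmul a b := rfl

lemma norm_ket_le (a : H₁) : ‖P.ket a‖ ≤ ‖a‖ :=
  (P.ket a).opNorm_le_bound (norm_nonneg _) fun b => (P.norm_tmul a b).le

lemma dense_span_tmul :
    Dense (Submodule.span ℂ {v : K | ∃ a b, v = P.tmul a b} : Set K) :=
  Submodule.dense_iff_topologicalClosure_eq_top.2 P.total

lemma clm_ext {F : Type*} [NormedAddCommGroup F] [NormedSpace ℂ F] {X Y : K →L[ℂ] F}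
    (h : ∀ a b, X (P.tmul a b) = Y (P.tmul a b)) : X = Y :=
  ContinuousLinearMap.ext_on P.dense_span_tmul fun _ ⟨a, b, hv⟩ => hv ▸ h a b

lemma ext_inner {v w : K} (h : ∀ a b, ⟪P.tmul a b, v⟫ = ⟪P.tmul a b, w⟫) : v = w := by
  refine (innerSL_inj (𝕜 := ℂ)).1 (P.clm_ext fun a b => ?_)
  simp only [innerSL_apply_apply]
  rw [← inner_conj_symm, h, inner_conj_symm]

lemma operator_ext {X Y : B K}
    (h : ∀ a b c d, ⟪P.tmul a b, X (P.tmul c d)⟫ = ⟪P.tmul a b, Y (P.tmul c d)⟫) : X = Y :=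
  P.clm_ext fun c d => P.ext_inner fun a b => h a b c d

lemma denseRange_lift_tmul : DenseRange (TensorProduct.lift P.tmul) :=
  P.dense_span_tmul.mono <| Submodule.span_le (p := LinearMap.range _).2 <| by
    rintro _ ⟨a, b, rfl⟩
    exact ⟨a ⊗ₜ[ℂ] b, TensorProduct.lift.tmul a b⟩

end HilbertTensor

namespace HilbertTensor

variable {H₁ H₂ K : Type*} [NormedAddCommGroup H₁] [InnerProductSpace ℂ H₁]
  [NormedAddCommGroup H₂] [InnerProductSpace ℂ H₂] [CompleteSpace H₂]
  [NormedAddCommGroup K] [InnerProductSpace ℂ K] [CompleteSpace K] (P : HilbertTensor H₁ H₂ K)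

/-- Dirac's `⟨a| ⊗ 1`. -/
def bra (a : H₁) : K →L[ℂ] H₂ := ContinuousLinearMap.adjoint (P.ket a)

lemma norm_bra_le (a : H₁) : ‖P.bra a‖ ≤ ‖a‖ :=
  (LinearIsometryEquiv.norm_map _ _).trans_le (P.norm_ket_le a)

lemma inner_bra_right (a : H₁) (b : H₂) (v : K) : ⟪b, P.bra a v⟫ = ⟪P.tmul a b, v⟫ :=
  ContinuousLinearMap.adjoint_inner_right _ _ _

lemma inner_bra_left (a : H₁) (b : H₂) (v : K) : ⟪P.bra a v, b⟫ = ⟪v, P.tmul a b⟫ :=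
  ContinuousLinearMap.adjoint_inner_left _ _ _

lemma bra_tmul (a c : H₁) (d : H₂) : P.bra a (P.tmul c d) = ⟪a, c⟫ • d :=
  ext_inner_left ℂ fun b => by rw [inner_bra_right, P.inner_tmul, inner_smul_right]

lemma ext_bra {v w : K} (h : ∀ a, P.bra a v = P.bra a w) : v = w :=
  P.ext_inner fun a b => by rw [← inner_bra_right, h, inner_bra_right]

/-- The matrix coefficient `(⟨a| ⊗ 1) X (|c⟩ ⊗ 1)`, i.e. the slice `(ω_{c,a} ⊗ id)(X)`. -/
def slice (X : B K) (a c : H₁) : B H₂ := P.bra a ∘L X ∘L P.ket c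

lemma slice_apply (X : B K) (a c : H₁) (d : H₂) : P.slice X a c d = P.bra a (X (P.tmul c d)) := rfl

lemma inner_slice (X : B K) (a c : H₁) (b d : H₂) :
    ⟪b, P.slice X a c d⟫ = ⟪P.tmul a b, X (P.tmul c d)⟫ := P.inner_bra_right _ _ _

lemma slice_ext {X Y : B K} (h : ∀ a c, P.slice X a c = P.slice Y a c) : X = Y :=
  P.operator_ext fun a b c d => by rw [← inner_slice, h, inner_slice]

lemma norm_slice_le (X : B K) (a c : H₁) : ‖P.slice X a c‖ ≤ ‖a‖ * ‖X‖ * ‖c‖ := by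
  calc ‖P.slice X a c‖ ≤ ‖P.bra a‖ * (‖X‖ * ‖P.ket c‖) :=
        (ContinuousLinearMap.opNorm_comp_le _ _).trans (by
          gcongr; exact ContinuousLinearMap.opNorm_comp_le _ _)
    _ ≤ ‖a‖ * (‖X‖ * ‖c‖) := by gcongr; exacts [P.norm_bra_le a, P.norm_ket_le c]
    _ = ‖a‖ * ‖X‖ * ‖c‖ := (mul_assoc _ _ _).symm

end HilbertTensor

lemma hilbertBasis_ext_inner {ι G : Type*} [NormedAddCommGroup G] [InnerProductSpace ℂ G]
    (e : HilbertBasis ι ℂ G) {v w : G} (h : ∀ i, ⟪e i, v⟫ = ⟪e i, w⟫) : v = w :=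
  e.repr.injective <| lp.ext <| funext fun i => by
    rw [e.repr_apply_apply, e.repr_apply_apply, h]

namespace HilbertTensor

variable {H₁ H₂ H₃ K K' : Type*}
  [NormedAddCommGroup H₁] [InnerProductSpace ℂ H₁] [CompleteSpace H₁]
  [NormedAddCommGroup H₂] [InnerProductSpace ℂ H₂] [CompleteSpace H₂]
  [NormedAddCommGroup H₃] [InnerProductSpace ℂ H₃] [CompleteSpace H₃]
  [NormedAddCommGroup K] [InnerProductSpace ℂ K] [CompleteSpace K]
  [NormedAddCommGroup K'] [InnerProductSpace ℂ K'] [CompleteSpace K']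
  (P : HilbertTensor H₁ H₂ K) (P' : HilbertTensor H₁ H₃ K')

lemma ext_bra_hilbertBasis {ι : Type*} (e : HilbertBasis ι ℂ H₁) {v w : K}
    (h : ∀ i, P.bra (e i) v = P.bra (e i) w) : v = w :=
  P.swap.ext_bra fun b => hilbertBasis_ext_inner e fun i => by
    rw [inner_bra_right, inner_bra_right, swap_tmul, ← inner_bra_right, h, inner_bra_right]

/-- The Hilbert basis `(e i ⊗ f j)` of a tensor product. -/
def prodBasis {ι κ : Type*} (e : HilbertBasis ι ℂ H₁) (f : HilbertBasis κ ℂ H₂) :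
    HilbertBasis (ι × κ) ℂ K :=
  HilbertBasis.mkOfOrthogonalEqBot (v := fun p : ι × κ => P.tmul (e p.1) (f p.2))
    (by
      classical
      rw [orthonormal_iff_ite]
      rintro ⟨i, j⟩ ⟨i', j'⟩
      rw [P.inner_tmul, orthonormal_iff_ite.1 e.orthonormal, orthonormal_iff_ite.1 f.orthonormal,
        ite_zero_mul_ite_zero, one_mul]
      simp only [Prod.mk.injEq])
    (by
      refine (Submodule.eq_bot_iff _).2 fun v hv => P.ext_bra_hilbertBasis e fun i =>
        hilbertBasis_ext_inner f fun j => ?_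
      rw [inner_bra_right, map_zero, inner_zero_right]
      exact hv _ (Submodule.subset_span ⟨(i, j), rfl⟩))

@[simp] lemma prodBasis_apply {ι κ : Type*} (e : HilbertBasis ι ℂ H₁) (f : HilbertBasis κ ℂ H₂)
    (p : ι × κ) : P.prodBasis e f p = P.tmul (e p.1) (f p.2) := by
  simp only [prodBasis, HilbertBasis.coe_mkOfOrthogonalEqBot]

lemma hasSum_inner_bra {ι : Type*} (e : HilbertBasis ι ℂ H₁) (v w : K) :
    HasSum (fun i => ⟪P.bra (e i) v, P.bra (e i) w⟫) ⟪v, w⟫ := by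
  obtain ⟨κ, f, -⟩ := exists_hilbertBasis ℂ H₂
  refine ((P.prodBasis e f).hasSum_inner_mul_inner v w).prod_fiberwise fun i => ?_
  simpa only [prodBasis_apply, inner_bra_left, inner_bra_right]
    using f.hasSum_inner_mul_inner (P.bra (e i) v) (P.bra (e i) w)

lemma hasSum_norm_bra_sq {ι : Type*} (e : HilbertBasis ι ℂ H₁) (v : K) :
    HasSum (fun i => ‖P.bra (e i) v‖ ^ 2) (‖v‖ ^ 2) := by
  have h := P.hasSum_inner_bra e v v
  simp only [inner_self_eq_norm_sq_to_K] at h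
  exact_mod_cast h

omit [CompleteSpace H₁] in
lemma bra_lift_compl₂ (T : H₂ →L[ℂ] H₃) (a : H₁) (x : TensorProduct ℂ H₁ H₂) :
    P'.bra a (TensorProduct.lift (P'.tmul.compl₂ T.toLinearMap) x)
      = T (P.bra a (TensorProduct.lift P.tmul x)) := by
  induction x using TensorProduct.induction_on with
  | zero => simp only [map_zero]
  | tmul c d => simp [bra_tmul]
  | add x y hx hy => simp only [map_add, hx, hy]

-- Parseval reduces the bound on `1 ⊗ T` to the bound on `T`, one slice at a time.
lemma norm_lift_compl₂_le (T : H₂ →L[ℂ] H₃) (x : TensorProduct ℂ H₁ H₂) :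
    ‖TensorProduct.lift (P'.tmul.compl₂ T.toLinearMap) x‖
      ≤ ‖T‖ * ‖TensorProduct.lift P.tmul x‖ := by
  obtain ⟨ι, e, -⟩ := exists_hilbertBasis ℂ H₁
  rw [← sq_le_sq₀ (norm_nonneg _) (by positivity), mul_pow]
  refine hasSum_le (fun i => ?_) (P'.hasSum_norm_bra_sq e _)
    ((P.hasSum_norm_bra_sq e _).mul_left (‖T‖ ^ 2))
  rw [P.bra_lift_compl₂ P', ← mul_pow]
  gcongr
  exact T.le_opNorm _

/-- The operator `1 ⊗ T` between tensor products with a common first factor. -/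
def lTensor (T : H₂ →L[ℂ] H₃) : K →L[ℂ] K' :=
  (TensorProduct.lift (P'.tmul.compl₂ T.toLinearMap)).extendOfNorm (TensorProduct.lift P.tmul)

@[simp] lemma lTensor_tmul (T : H₂ →L[ℂ] H₃) (a : H₁) (b : H₂) :
    P.lTensor P' T (P.tmul a b) = P'.tmul a (T b) := by
  simpa [lTensor] using LinearMap.extendOfNorm_eq P.denseRange_lift_tmul
    ⟨‖T‖, P.norm_lift_compl₂_le P' T⟩ (a ⊗ₜ[ℂ] b)

lemma adjoint_lTensor (T : H₂ →L[ℂ] H₃) :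
    ContinuousLinearMap.adjoint (P.lTensor P' T)
      = P'.lTensor P (ContinuousLinearMap.adjoint T) := by
  refine P'.clm_ext fun c d => P.ext_inner fun a b => ?_
  rw [ContinuousLinearMap.adjoint_inner_right, lTensor_tmul, lTensor_tmul, inner_tmul, inner_tmul,
    ContinuousLinearMap.adjoint_inner_right]

lemma lTensor_add (S T : H₂ →L[ℂ] H₃) :
    P.lTensor P' (S + T) = P.lTensor P' S + P.lTensor P' T := P.clm_ext fun a b => by simp

lemma lTensor_smul (r : ℂ) (T : H₂ →L[ℂ] H₃) :
    P.lTensor P' (r • T) = r • P.lTensor P' T := P.clm_ext fun a b => by simp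

/-- The amplification `Y ↦ 1 ⊗ Y`. -/
def ampR : B H₂ →⋆ₐ[ℂ] B K where
  toFun Y := P.lTensor P Y
  map_one' := P.clm_ext fun a b => by simp
  map_mul' X Y := P.clm_ext fun a b => by simp
  map_zero' := P.clm_ext fun a b => by simp
  map_add' := P.lTensor_add P
  commutes' r := P.clm_ext fun a b => by simp [Algebra.algebraMap_eq_smul_one]
  map_star' X := (P.adjoint_lTensor P X).symm

/-- The amplification `X ↦ X ⊗ 1`. -/
def ampL : B H₁ →⋆ₐ[ℂ] B K := P.swap.ampR

@[simp] lemma ampR_tmul (Y : B H₂) (a : H₁) (b : H₂) :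
    P.ampR Y (P.tmul a b) = P.tmul a (Y b) := P.lTensor_tmul P Y a b

@[simp] lemma ampL_tmul (X : B H₁) (a : H₁) (b : H₂) :
    P.ampL X (P.tmul a b) = P.tmul (X a) b := P.swap.ampR_tmul X b a

lemma commute_ampL_ampR (X : B H₁) (Y : B H₂) : Commute (P.ampL X) (P.ampR Y) :=
  P.clm_ext fun a b => by simp

lemma bra_ampR (a : H₁) (Y : B H₂) (v : K) : P.bra a (P.ampR Y v) = Y (P.bra a v) := by
  have h : P.bra a ∘L P.ampR Y = Y ∘L P.bra a := P.clm_ext fun c d => by simp [bra_tmul]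
  exact DFunLike.congr_fun h v

lemma slice_ampR_mul (X : B K) (Y : B H₂) (a c : H₁) :
    P.slice (P.ampR Y * X) a c = Y * P.slice X a c := by
  ext d; simp [slice_apply, bra_ampR]

lemma slice_mul_ampR (X : B K) (Y : B H₂) (a c : H₁) :
    P.slice (X * P.ampR Y) a c = P.slice X a c * Y := by
  ext d; simp [slice_apply]

lemma commute_ampR_iff {X : B K} {Y : B H₂} :
    Commute X (P.ampR Y) ↔ ∀ a c, Commute (P.slice X a c) Y := by
  simp only [commute_iff_eq, ← slice_mul_ampR, ← slice_ampR_mul]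
  exact ⟨fun h a c => by rw [h], P.slice_ext⟩

lemma slice_ampL (X : B H₁) (a c : H₁) : P.slice (P.ampL X) a c = ⟪a, X c⟫ • (1 : B H₂) := by
  ext d; simp [slice_apply, bra_tmul]

lemma slice_ampR (Y : B H₂) (a c : H₁) : P.slice (P.ampR Y) a c = ⟪a, c⟫ • Y := by
  ext d; simp [slice_apply, bra_tmul]

section assoc

variable {H₁₂ H₂₃ : Type*}
  [NormedAddCommGroup H₁₂] [InnerProductSpace ℂ H₁₂] [CompleteSpace H₁₂]
  [NormedAddCommGroup H₂₃] [InnerProductSpace ℂ H₂₃] [CompleteSpace H₂₃]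
  (P : HilbertTensor H₁ H₂ H₁₂) (P' : HilbertTensor H₂ H₃ H₂₃) (L : HilbertTensor H₁ H₂₃ K)

omit [CompleteSpace H₃]

lemma lTensor_bra_lTensor_ket (c d : H₃) (v : H₁₂) :
    L.lTensor P (P'.swap.bra c) (P.lTensor L (P'.swap.ket d) v) = ⟪c, d⟫ • v := by
  have h : L.lTensor P (P'.swap.bra c) ∘L P.lTensor L (P'.swap.ket d)
      = ⟪c, d⟫ • ContinuousLinearMap.id ℂ H₁₂ :=
    P.clm_ext fun a b => by simp [-swap_tmul, bra_tmul]
  exact DFunLike.congr_fun h v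

/-- The presentation `(H₁ ⊗ H₂) ⊗ H₃` of a space presented as `H₁ ⊗ (H₂ ⊗ H₃)`. -/
def assoc : HilbertTensor H₁₂ H₃ K where
  tmul := LinearMap.mk₂ ℂ (fun v c => P.lTensor L (P'.swap.ket c) v)
    (fun _ _ _ => map_add _ _ _) (fun _ _ _ => map_smul _ _ _)
    (fun v c d => by rw [map_add, lTensor_add, add_apply])
    (fun r v c => by rw [map_smul, lTensor_smul, smul_apply])
  inner_tmul v c w d := by
    rw [LinearMap.mk₂_apply, LinearMap.mk₂_apply, ← ContinuousLinearMap.adjoint_inner_right,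
      adjoint_lTensor, ← bra, lTensor_bra_lTensor_ket, inner_smul_right, mul_comm]
  total := by
    refine Submodule.topologicalClosure_eq_top_iff.2 <| (Submodule.eq_bot_iff _).2 fun v hv =>
      L.ext_bra fun a => P'.ext_inner fun b c => ?_
    rw [inner_bra_right, map_zero, inner_zero_right]
    exact hv _ (Submodule.subset_span ⟨P.tmul a b, c, by simp⟩)

@[simp] lemma assoc_tmul (a : H₁) (b : H₂) (c : H₃) :
    (assoc P P' L).tmul (P.tmul a b) c = L.tmul a (P'.tmul b c) := by
  simp [assoc]

end assoc

end HilbertTensor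

namespace HilbertTensor

/-- The completed tensor product as a `HilbertTensor`. -/
def ofCompletion (H₁ H₂ : Type*) [NormedAddCommGroup H₁] [InnerProductSpace ℂ H₁]
    [NormedAddCommGroup H₂] [InnerProductSpace ℂ H₂] :
    HilbertTensor H₁ H₂ (UniformSpace.Completion (TensorProduct ℂ H₁ H₂)) where
  tmul := (TensorProduct.mk ℂ H₁ H₂).compr₂
    (UniformSpace.Completion.toComplₗᵢ (𝕜 := ℂ)).toLinearMap
  inner_tmul a b c d := by simp
  total := by
    rw [← Submodule.dense_iff_topologicalClosure_eq_top]
    refine UniformSpace.Completion.denseRange_coe.mono ?_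
    rintro _ ⟨x, rfl⟩
    induction x using TensorProduct.induction_on with
    | zero => exact Submodule.zero_mem _
    | add x y hx hy => exact UniformSpace.Completion.coe_add x y ▸ Submodule.add_mem _ hx hy
    | tmul a b => exact Submodule.subset_span ⟨a, b, by simp⟩

section assoc

variable {H₁ H₂ H₃ H₁₂ H₂₃ K : Type*}
  [NormedAddCommGroup H₁] [InnerProductSpace ℂ H₁] [CompleteSpace H₁]
  [NormedAddCommGroup H₂] [InnerProductSpace ℂ H₂] [CompleteSpace H₂]
  [NormedAddCommGroup H₃] [InnerProductSpace ℂ H₃] [CompleteSpace H₃]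
  [NormedAddCommGroup H₁₂] [InnerProductSpace ℂ H₁₂] [CompleteSpace H₁₂]
  [NormedAddCommGroup H₂₃] [InnerProductSpace ℂ H₂₃] [CompleteSpace H₂₃]
  [NormedAddCommGroup K] [InnerProductSpace ℂ K] [CompleteSpace K]
  (P : HilbertTensor H₁ H₂ H₁₂) (P' : HilbertTensor H₂ H₃ H₂₃) (L : HilbertTensor H₁ H₂₃ K)

omit [CompleteSpace H₁] [CompleteSpace H₂] [CompleteSpace H₃] [CompleteSpace H₂₃]
  [CompleteSpace K] in
lemma clm_ext₃ {F : Type*} [NormedAddCommGroup F] [NormedSpace ℂ F] {X Y : K →L[ℂ] F}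
    (h : ∀ a b c, X (L.tmul a (P'.tmul b c)) = Y (L.tmul a (P'.tmul b c))) : X = Y :=
  L.clm_ext fun a v =>
    DFunLike.congr_fun (P'.clm_ext (X := X ∘L L.ket a) (Y := Y ∘L L.ket a) (h a)) v

lemma assoc_ampL_ampL (X : B H₁) : (assoc P P' L).ampL (P.ampL X) = L.ampL X :=
  P'.clm_ext₃ L fun a b c => by
    rw [ampL_tmul, ← assoc_tmul P, ← assoc_tmul P, ampL_tmul, ampL_tmul]

lemma assoc_ampL_ampR (X : B H₂) : (assoc P P' L).ampL (P.ampR X) = L.ampR (P'.ampL X) :=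
  P'.clm_ext₃ L fun a b c => by
    rw [ampR_tmul, ampL_tmul, ← assoc_tmul P, ← assoc_tmul P, ampL_tmul, ampR_tmul]

lemma assoc_ampR (X : B H₃) : (assoc P P' L).ampR X = L.ampR (P'.ampR X) :=
  P'.clm_ext₃ L fun a b c => by
    rw [ampR_tmul, ampR_tmul, ← assoc_tmul P, ← assoc_tmul P, ampR_tmul]

lemma slice_assoc_ampL (X : B H₁₂) (a c : H₁) :
    L.slice ((assoc P P' L).ampL X) a c = P'.ampL (P.slice X a c) :=
  P'.operator_ext fun b d b' d' => by
    rw [inner_slice, ampL_tmul, inner_tmul, inner_slice, ← assoc_tmul P, ← assoc_tmul P,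
      ampL_tmul, inner_tmul]

omit [CompleteSpace H₃] in
lemma slice_swap_assoc_ampR (Z : B H₂₃) (c d : H₃) :
    (assoc P P' L).swap.slice (L.ampR Z) c d = P.ampR (P'.swap.slice Z c d) :=
  P.operator_ext fun a b a' b' => by
    rw [inner_slice, ampR_tmul, inner_tmul, inner_slice, swap_tmul, swap_tmul, assoc_tmul,
      assoc_tmul, ampR_tmul, inner_tmul, swap_tmul, swap_tmul]

-- Under the hypotheses, `X` lies in `B(H₁) ⊗̄ N` and `Z` in `N' ⊗̄ B(H₃)`.
lemma commute_assoc_ampL_ampR (N : VonNeumannAlgebra H₂) {X : B H₁₂} {Z : B H₂₃}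
    (hX : ∀ y ∈ N.commutant, Commute X (P.ampR y)) (hZ : ∀ y ∈ N, Commute Z (P'.ampL y)) :
    Commute ((assoc P P' L).ampL X) (L.ampR Z) :=
  Commute.symm <| (assoc P P' L).swap.commute_ampR_iff.2 fun c d => by
    rw [slice_swap_assoc_ampR]
    refine (hX _ (VonNeumannAlgebra.mem_commutant_iff.2 fun y hy => ?_)).symm
    exact (P'.swap.commute_ampR_iff.1 (hZ y hy) c d).symm

end assoc

end HilbertTensor

section Normal

open Filter Topology

variable {K : Type*} [NormedAddCommGroup K] [InnerProductSpace ℂ K]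

lemma isNormalFunctional_vecFunctional (ξ η : K) :
    IsNormalFunctional K (vecFunctional K ξ η) := by
  refine ⟨Pi.single 0 ξ, Pi.single 0 η, ?_, ?_, fun x => ?_⟩
  · exact summable_of_ne_finset_zero (s := {0}) fun n hn => by
      simp [Pi.single_eq_of_ne (Finset.notMem_singleton.1 hn)]
  · exact summable_of_ne_finset_zero (s := {0}) fun n hn => by
      simp [Pi.single_eq_of_ne (Finset.notMem_singleton.1 hn)]
  · simpa [vecFunctional] using
      hasSum_single (f := fun n : ℕ => ⟪(Pi.single 0 η : ℕ → K) n, x ((Pi.single 0 ξ : ℕ → K) n)⟫) 0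
        fun n hn => by simp [Pi.single_eq_of_ne hn]

omit [InnerProductSpace ℂ K] in
lemma summable_norm_mul_norm {ξ η : ℕ → K} (hξ : Summable fun n => ‖ξ n‖ ^ 2)
    (hη : Summable fun n => ‖η n‖ ^ 2) : Summable fun n => ‖η n‖ * ‖ξ n‖ :=
  Summable.of_nonneg_of_le (fun n => by positivity)
    (fun n => by nlinarith [two_mul_le_add_sq ‖η n‖ ‖ξ n‖, norm_nonneg (η n), norm_nonneg (ξ n)])
    (hη.add hξ)

lemma norm_inner_apply_le (X : B K) (ξ η : K) : ‖⟪η, X ξ⟫‖ ≤ ‖η‖ * ‖ξ‖ * ‖X‖ :=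
  calc ‖⟪η, X ξ⟫‖ ≤ ‖η‖ * ‖X ξ‖ := norm_inner_le_norm _ _
    _ ≤ ‖η‖ * (‖X‖ * ‖ξ‖) := by gcongr; exact X.le_opNorm _
    _ = ‖η‖ * ‖ξ‖ * ‖X‖ := by ring

lemma exists_hasSum_inner {ξ η : ℕ → K} (hξ : Summable fun n => ‖ξ n‖ ^ 2)
    (hη : Summable fun n => ‖η n‖ ^ 2) :
    ∃ f : B K →ₗ[ℂ] ℂ, ∀ X : B K, HasSum (fun n => ⟪η n, X (ξ n)⟫) (f X) := by
  have hs : ∀ X : B K, Summable fun n => ⟪η n, X (ξ n)⟫ := fun X =>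
    ((summable_norm_mul_norm hξ hη).mul_right ‖X‖).of_norm_bounded
      fun n => norm_inner_apply_le X _ _
  exact ⟨{ toFun := fun X => ∑' n, ⟪η n, X (ξ n)⟫
           map_add' := fun X Y => by
             simp only [add_apply, inner_add_right, (hs X).tsum_add (hs Y)]
           map_smul' := fun c X => by
             simp only [smul_apply, inner_smul_right, tsum_mul_left, RingHom.id_apply,
               smul_eq_mul] }, fun X => (hs X).hasSum⟩

lemma IsNormalFunctional.continuous {f : B K →ₗ[ℂ] ℂ} (hf : IsNormalFunctional K f) :
    Continuous f := by
  obtain ⟨ξ, η, hξ, hη, h⟩ := hf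
  refine AddMonoidHomClass.continuous_of_bound f (∑' n, ‖η n‖ * ‖ξ n‖) fun X => ?_
  rw [← (h X).tsum_eq, ← tsum_mul_right]
  exact tsum_of_norm_bounded ((summable_norm_mul_norm hξ hη).mul_right ‖X‖).hasSum
    fun n => norm_inner_apply_le X _ _

lemma IsNormalFunctional.tendsto {α : Type*} {l : Filter α} {f : B K →ₗ[ℂ] ℂ}
    (hf : IsNormalFunctional K f) {X : α → B K} {Y : B K} {C : ℝ} (hC : ∀ a, ‖X a‖ ≤ C)
    (hX : ∀ v w, Tendsto (fun a => ⟪v, X a w⟫) l (𝓝 ⟪v, Y w⟫)) :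
    Tendsto (fun a => f (X a)) l (𝓝 (f Y)) := by
  obtain ⟨ξ, η, hξ, hη, hsum⟩ := hf
  simp only [← (hsum _).tsum_eq]
  refine tendsto_tsum_of_dominated_convergence ((summable_norm_mul_norm hξ hη).mul_right C)
    (fun n => hX _ _) (Eventually.of_forall fun a n => ?_)
  exact (norm_inner_apply_le _ _ _).trans (by gcongr; exact hC a)

variable [CompleteSpace K]

lemma isStarProjection_sum_rankOne_self {ι : Type*} {e : ι → K} (he : Orthonormal ℂ e)
    (s : Finset ι) : IsStarProjection (∑ i ∈ s, InnerProductSpace.rankOne ℂ (e i) (e i)) := by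
  classical
  refine ⟨?_, ?_⟩
  · simp only [IsIdempotentElem, Finset.sum_mul, Finset.mul_sum, ContinuousLinearMap.mul_def,
      InnerProductSpace.rankOne_comp_rankOne, orthonormal_iff_ite.1 he, ite_smul, one_smul,
      zero_smul]
    exact Finset.sum_congr rfl fun i hi => by rw [Finset.sum_ite_eq', if_pos hi]
  · simp only [IsSelfAdjoint, star_sum, ContinuousLinearMap.star_eq_adjoint,
      InnerProductSpace.adjoint_rankOne]

-- Compress `X` by the finite-rank projections onto the first basis vectors.
lemma IsNormalFunctional.ext_hilbertBasis {ι : Type*} (e : HilbertBasis ι ℂ K)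
    {f g : B K →ₗ[ℂ] ℂ} (hf : IsNormalFunctional K f) (hg : IsNormalFunctional K g)
    (h : ∀ i j, f (InnerProductSpace.rankOne ℂ (e i) (e j))
      = g (InnerProductSpace.rankOne ℂ (e i) (e j))) : f = g := by
  set p : Finset ι → B K := fun s => ∑ i ∈ s, InnerProductSpace.rankOne ℂ (e i) (e i)
  have hp : ∀ s, IsStarProjection (p s) := isStarProjection_sum_rankOne_self e.orthonormal
  have hp_tendsto : ∀ v, Tendsto (fun s => p s v) atTop (𝓝 v) := fun v => by
    simpa only [p, sum_apply, InnerProductSpace.rankOne_apply, HasSum, e.repr_apply_apply,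
      SummationFilter.unconditional_filter] using e.hasSum_repr v
  refine LinearMap.ext fun X => ?_
  have hbound : ∀ s, ‖p s * X * p s‖ ≤ ‖X‖ := fun s =>
    calc ‖p s * X * p s‖ ≤ ‖p s‖ * ‖X‖ * ‖p s‖ := norm_mul₃_le
      _ ≤ 1 * ‖X‖ * 1 := by gcongr <;> exact (hp s).norm_le
      _ = ‖X‖ := by rw [one_mul, mul_one]
  have hlim : ∀ v w, Tendsto (fun s => ⟪v, (p s * X * p s) w⟫) atTop (𝓝 ⟪v, X w⟫) := fun v w => by
    have hp_inner : ∀ s, ⟪v, (p s * X * p s) w⟫ = ⟪p s v, X (p s w)⟫ := fun s => by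
      rw [← ContinuousLinearMap.adjoint_inner_right, ← ContinuousLinearMap.star_eq_adjoint,
        (hp s).isSelfAdjoint.star_eq]
      rfl
    simp only [hp_inner]
    exact (hp_tendsto v).inner ((X.continuous.tendsto w).comp (hp_tendsto w))
  have hcompress : ∀ s, f (p s * X * p s) = g (p s * X * p s) := fun s => by
    simp only [p, Finset.sum_mul, Finset.mul_sum, map_sum, ContinuousLinearMap.mul_def,
      ContinuousLinearMap.comp_apply, InnerProductSpace.comp_rankOne,
      InnerProductSpace.rankOne_apply, map_smul, smul_apply, h]
  refine tendsto_nhds_unique (hf.tendsto hbound hlim) ?_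
  simpa only [hcompress] using hg.tendsto hbound hlim

end Normal

namespace HilbertTensor

variable {H₁ H₂ K : Type*}
  [NormedAddCommGroup H₁] [InnerProductSpace ℂ H₁] [CompleteSpace H₁]
  [NormedAddCommGroup H₂] [InnerProductSpace ℂ H₂] [CompleteSpace H₂]
  [NormedAddCommGroup K] [InnerProductSpace ℂ K] [CompleteSpace K]
  (P : HilbertTensor H₁ H₂ K)

lemma ampL_mul_ampR_tmul (X : B H₁) (Y : B H₂) (a : H₁) (b : H₂) :
    (P.ampL X * P.ampR Y) (P.tmul a b) = P.tmul (X a) (Y b) := by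
  rw [mul_apply_eq_comp, ampR_tmul, ampL_tmul]

lemma rankOne_tmul (a c : H₁) (b d : H₂) :
    InnerProductSpace.rankOne ℂ (P.tmul a b) (P.tmul c d)
      = P.ampL (InnerProductSpace.rankOne ℂ a c) * P.ampR (InnerProductSpace.rankOne ℂ b d) :=
  P.clm_ext fun a' b' => by
    rw [ampL_mul_ampR_tmul]
    simp only [InnerProductSpace.rankOne_apply, P.inner_tmul, map_smul,
      LinearMap.smul_apply, smul_smul, mul_comm]

lemma normal_ext {f g : B K →ₗ[ℂ] ℂ} (hf : IsNormalFunctional K f) (hg : IsNormalFunctional K g)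
    (h : ∀ X Y, f (P.ampL X * P.ampR Y) = g (P.ampL X * P.ampR Y)) : f = g := by
  obtain ⟨ι, e, -⟩ := exists_hilbertBasis ℂ H₁
  obtain ⟨κ, e', -⟩ := exists_hilbertBasis ℂ H₂
  refine hf.ext_hilbertBasis (P.prodBasis e e') hg fun i j => ?_
  rw [prodBasis_apply, prodBasis_apply, rankOne_tmul, h]

end HilbertTensor

section QuantumGroup

variable {H H2 : Type*}
  [NormedAddCommGroup H] [InnerProductSpace ℂ H] [CompleteSpace H]
  [NormedAddCommGroup H2] [InnerProductSpace ℂ H2] [CompleteSpace H2]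

lemma mem_iff_forall_commute {N : VonNeumannAlgebra H} {x : B H} :
    x ∈ N ↔ ∀ b ∈ N.commutant, Commute x b := by
  rw [← N.commutant_commutant, VonNeumannAlgebra.mem_commutant_iff, N.commutant_commutant]
  exact forall₂_congr fun b _ => eq_comm

lemma mem_commutant_iff_forall_commute {N : VonNeumannAlgebra H} {x : B H} :
    x ∈ N.commutant ↔ ∀ b ∈ N, Commute x b :=
  VonNeumannAlgebra.mem_commutant_iff.trans (forall₂_congr fun _ _ => eq_comm)

lemma star_inner_left (x : B H) (a b : H) : ⟪star x a, b⟫ = ⟪a, x b⟫ := by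
  rw [ContinuousLinearMap.star_eq_adjoint, ContinuousLinearMap.adjoint_inner_left]

lemma star_inner_right (x : B H) (a b : H) : ⟪a, star x b⟫ = ⟪x a, b⟫ := by
  rw [ContinuousLinearMap.star_eq_adjoint, ContinuousLinearMap.adjoint_inner_right]

namespace LCQG

variable (Q : LCQG H H2)

/-- The tensor square `L²(𝔾) ⊗ L²(𝔾)` of a quantum group. -/
def square : HilbertTensor H H H2 := ⟨Q.tmul, Q.tmul_inner, Q.tmul_total⟩

lemma tensorOp_eq (x y : B H) : Q.tensorOp x y = Q.square.ampL x * Q.square.ampR y :=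
  Q.square.clm_ext fun a b =>
    (Q.tensorOp_apply x y a b).trans (Q.square.ampL_mul_ampR_tmul x y a b).symm

lemma tensorOp_one_right (x : B H) : Q.tensorOp x 1 = Q.square.ampL x := by
  rw [tensorOp_eq, map_one, mul_one]

lemma tensorOp_one_left (y : B H) : Q.tensorOp 1 y = Q.square.ampR y := by
  rw [tensorOp_eq, map_one, one_mul]

lemma funcTensor_vecFunctional (ξ η ξ' η' : H) :
    Q.funcTensor (vecFunctional H ξ η) (vecFunctional H ξ' η')
      = vecFunctional H2 (Q.square.tmul ξ ξ') (Q.square.tmul η η') := by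
  refine Q.square.normal_ext (Q.funcTensor_normal _ _ (isNormalFunctional_vecFunctional _ _)
    (isNormalFunctional_vecFunctional _ _)) (isNormalFunctional_vecFunctional _ _) fun x y => ?_
  rw [← tensorOp_eq, Q.funcTensor_elem]
  change ⟪η, x ξ⟫ * ⟪η', y ξ'⟫ = ⟪Q.tmul η η', Q.tensorOp x y (Q.tmul ξ ξ')⟫
  rw [Q.tensorOp_apply, Q.tmul_inner]

lemma hasSum_funcTensor {ω : B H →ₗ[ℂ] ℂ} {ξ η : ℕ → H} (hξ : Summable fun n => ‖ξ n‖ ^ 2)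
    (hη : Summable fun n => ‖η n‖ ^ 2) (hω : ∀ x : B H, HasSum (fun n => ⟪η n, x (ξ n)⟫) (ω x))
    (a b : H) (X : B H2) :
    HasSum (fun n => ⟪Q.square.tmul (η n) a, X (Q.square.tmul (ξ n) b)⟫)
      (Q.funcTensor ω (vecFunctional H b a) X) := by
  have hsq : ∀ {ζ : ℕ → H}, (Summable fun n => ‖ζ n‖ ^ 2) → ∀ c : H,
      Summable fun n => ‖Q.square.tmul (ζ n) c‖ ^ 2 := fun hζ c => by
    simpa only [Q.square.norm_tmul, mul_pow] using hζ.mul_right (‖c‖ ^ 2)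
  obtain ⟨f, hf⟩ := exists_hasSum_inner (hsq hξ b) (hsq hη a)
  have hf_eq : Q.funcTensor ω (vecFunctional H b a) = f := by
    refine Q.square.normal_ext (Q.funcTensor_normal _ _ ⟨ξ, η, hξ, hη, hω⟩
      (isNormalFunctional_vecFunctional _ _)) ⟨_, _, hsq hξ b, hsq hη a, hf⟩ fun x y => ?_
    rw [← tensorOp_eq, Q.funcTensor_elem, tensorOp_eq]
    refine HasSum.unique ?_ (hf _)
    simp only [Q.square.ampL_mul_ampR_tmul, Q.square.inner_tmul]
    exact (hω x).mul_right _
  exact hf_eq ▸ hf X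

lemma sliceL_vecFunctional (ξ η : H) (X : B H2) :
    Q.sliceL (vecFunctional H ξ η) X = Q.square.slice X η ξ := by
  refine ContinuousLinearMap.ext fun b => ext_inner_left ℂ fun a => ?_
  rw [Q.square.inner_slice]
  exact (Q.sliceL_char _ X b a).trans (DFunLike.congr_fun (Q.funcTensor_vecFunctional ξ η b a) X)

lemma sliceR_vecFunctional (ξ η : H) (X : B H2) :
    Q.sliceR (vecFunctional H ξ η) X = Q.square.swap.slice X η ξ := by
  refine ContinuousLinearMap.ext fun b => ext_inner_left ℂ fun a => ?_
  rw [Q.square.swap.inner_slice]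
  exact (Q.sliceR_char _ X b a).trans (DFunLike.congr_fun (Q.funcTensor_vecFunctional b a ξ η) X)

lemma hasSum_slice {ω : B H →ₗ[ℂ] ℂ} {ξ η : ℕ → H} (hξ : Summable fun n => ‖ξ n‖ ^ 2)
    (hη : Summable fun n => ‖η n‖ ^ 2) (hω : ∀ x : B H, HasSum (fun n => ⟪η n, x (ξ n)⟫) (ω x))
    (X : B H2) : HasSum (fun n => Q.square.slice X (η n) (ξ n)) (Q.sliceL ω X) := by
  have hs : Summable fun n => Q.square.slice X (η n) (ξ n) :=
    ((summable_norm_mul_norm hξ hη).mul_right ‖X‖).of_norm_bounded fun n =>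
      (Q.square.norm_slice_le X _ _).trans_eq (mul_right_comm _ _ _)
  have h_eq : Q.sliceL ω X = ∑' n, Q.square.slice X (η n) (ξ n) := by
    refine ContinuousLinearMap.ext fun b => ext_inner_left ℂ fun a => ?_
    have hl := hs.hasSum.mapL ((innerSL ℂ a).comp (ContinuousLinearMap.apply ℂ H b))
    have hr := Q.hasSum_funcTensor hξ hη hω a b X
    simp only [← Q.square.inner_slice] at hr
    exact (Q.sliceL_char ω X b a).trans (hr.unique hl)
  exact h_eq ▸ hs.hasSum

lemma flipU_tmul (a b : H) : Q.flipU (Q.square.tmul a b) = Q.square.tmul b a := Q.flipU_apply a b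

lemma flipU_mul_self : Q.flipU * Q.flipU = 1 :=
  Q.square.clm_ext fun a b => by simp [flipU_tmul]

lemma star_flipU : star Q.flipU = Q.flipU :=
  Q.square.operator_ext fun a b c d => by
    rw [star_inner_right, flipU_tmul, flipU_tmul, Q.square.inner_tmul, Q.square.inner_tmul,
      mul_comm]

lemma flipU_mem_unitary : Q.flipU ∈ unitary (B H2) := by
  rw [Unitary.mem_iff, star_flipU, flipU_mul_self]
  exact ⟨rfl, rfl⟩

lemma semiconjBy_flipU_ampL (x : B H) :
    SemiconjBy Q.flipU (Q.square.ampL x) (Q.square.ampR x) :=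
  Q.square.clm_ext fun a b => by simp [flipU_tmul]

lemma semiconjBy_flipU_ampR (x : B H) :
    SemiconjBy Q.flipU (Q.square.ampR x) (Q.square.ampL x) :=
  Q.square.clm_ext fun a b => by simp [flipU_tmul]

lemma slice_flipU_conj (X : B H2) (a c : H) :
    Q.square.slice (Q.flipU * X * Q.flipU) a c = Q.square.swap.slice X a c := by
  refine ContinuousLinearMap.ext fun d => ext_inner_left ℂ fun b => ?_
  rw [Q.square.inner_slice, Q.square.swap.inner_slice, mul_apply_eq_comp, mul_apply_eq_comp,
    flipU_tmul, ← star_inner_left, star_flipU, flipU_tmul]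
  rfl

lemma slice_swap_flipU_conj (X : B H2) (a c : H) :
    Q.square.swap.slice (Q.flipU * X * Q.flipU) a c = Q.square.slice X a c := by
  rw [← slice_flipU_conj, ← mul_assoc, ← mul_assoc, flipU_mul_self, one_mul, mul_assoc,
    flipU_mul_self, mul_one]

/-- The co-opposite `y ↦ W (y ⊗ 1) W*` of the dual co-multiplication `Δ̂`. -/
def DeltahatOp (y : B H) : B H2 := Q.W * Q.square.ampL y * star Q.W

lemma Deltahat_eq (y : B H) : Q.Deltahat y = Q.flipU * Q.DeltahatOp y * Q.flipU := by
  have h_flip : Q.flipU * Q.square.ampR y * Q.flipU = Q.square.ampL y := by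
    rw [(Q.semiconjBy_flipU_ampR y).eq, mul_assoc, flipU_mul_self, mul_one]
  rw [Deltahat, What, DeltahatOp, ← h_flip, star_mul, star_mul, star_star, star_flipU,
    tensorOp_one_left]
  noncomm_ring

variable {Q}

lemma W_commute_ampL {b : B H} (hb : b ∈ Q.M.commutant) : Commute Q.W (Q.square.ampL b) :=
  Q.tensorOp_one_right b ▸ Q.W_mem b hb 1 (one_mem _)

lemma W_commute_ampR {b : B H} (hb : b ∈ Q.Mhat.commutant) : Commute Q.W (Q.square.ampR b) :=
  Q.tensorOp_one_left b ▸ Q.W_mem 1 (one_mem _) b hb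

lemma V_commute_ampL {b : B H} (hb : b ∈ Q.Mhat) : Commute Q.V (Q.square.ampL b) :=
  Q.tensorOp_one_right b ▸ Q.V_mem b hb 1 (one_mem _)

lemma slice_W_mem (a c : H) : Q.square.slice Q.W a c ∈ Q.Mhat :=
  mem_iff_forall_commute.2 fun _ hb => Q.square.commute_ampR_iff.1 (W_commute_ampR hb) a c

lemma Delta_eq_V_conj {x : B H} (hx : x ∈ Q.M) :
    Q.Delta x = Q.V * Q.square.ampL x * star Q.V :=
  Q.tensorOp_one_right x ▸ Q.Delta_V x hx

lemma Delta_commute_ampR {x b : B H} (hx : x ∈ Q.M) (hb : b ∈ Q.M.commutant) :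
    Commute (Q.Delta x) (Q.square.ampR b) :=
  Q.tensorOp_one_left b ▸ Q.Delta_mem x hx 1 (one_mem _) b hb

variable (Q)

lemma Delta_eq (x : B H) : Q.Delta x = star Q.W * Q.square.ampR x * Q.W := by
  rw [Delta, tensorOp_one_left]

lemma W_mem_unitary : Q.W ∈ unitary (B H2) := Unitary.mem_iff.2 ⟨Q.W_unitary_l, Q.W_unitary_r⟩

lemma V_mem_unitary : Q.V ∈ unitary (B H2) := Unitary.mem_iff.2 ⟨Q.V_unitary_l, Q.V_unitary_r⟩

end LCQG

namespace DiscreteKacQG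

variable {Q : DiscreteKacQG H H2}

lemma slice_swap_DeltahatOp_mem {y : B H} (hy : y ∈ Q.Mhat) (a c : H) :
    Q.square.swap.slice (Q.DeltahatOp y) a c ∈ Q.Mhat := by
  have h := Q.slice_Deltahat_memL (vecFunctional H c a) y hy
  rwa [Q.Deltahat_eq, Q.sliceL_vecFunctional, Q.slice_flipU_conj] at h

lemma phihat_slice_DeltahatOp {y : B H} (hy : y ∈ Q.Mhat) (a c : H) :
    Q.phihat (Q.square.slice (Q.DeltahatOp y) a c) = ⟪a, c⟫ * Q.phihat y := by
  have h := Q.phihat_right_inv y hy _ (isNormalFunctional_vecFunctional c a)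
  rwa [Q.Deltahat_eq, Q.sliceR_vecFunctional, Q.slice_swap_flipU_conj] at h

lemma phihat_slice_swap_DeltahatOp {y : B H} (hy : y ∈ Q.Mhat) (a c : H) :
    Q.phihat (Q.square.swap.slice (Q.DeltahatOp y) a c) = ⟪a, c⟫ * Q.phihat y := by
  have h := Q.phihat_left_inv y hy _ (isNormalFunctional_vecFunctional c a)
  rwa [Q.Deltahat_eq, Q.sliceL_vecFunctional, Q.slice_flipU_conj] at h

lemma DeltahatOp_commute_ampL {y b : B H} (hy : y ∈ Q.Mhat) (hb : b ∈ Q.Mhat.commutant) :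
    Commute (Q.DeltahatOp y) (Q.square.ampL b) :=
  Q.square.swap.commute_ampR_iff.2 fun a c =>
    mem_iff_forall_commute.1 (slice_swap_DeltahatOp_mem hy a c) b hb

variable (Q) in
/-- The cyclic trace vector `Λ(1)` implementing the Haar state `φ̂`. -/
def cyclicVector : H := Q.Lam 1

lemma phihat_eq_inner {y : B H} (hy : y ∈ Q.Mhat) :
    Q.phihat y = ⟪Q.cyclicVector, y Q.cyclicVector⟫ := by
  rw [cyclicVector, Q.Lam_act y hy 1 (one_mem _), mul_one, Q.Lam_inner 1 (one_mem _) y hy,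
    star_one, one_mul]

variable (Q) in
lemma inner_cyclicVector_self : ⟪Q.cyclicVector, Q.cyclicVector⟫ = 1 :=
  (phihat_eq_inner (one_mem Q.Mhat)).symm.trans Q.phihat_state.1

variable (Q) in
lemma norm_cyclicVector : ‖Q.cyclicVector‖ = 1 := by
  rw [norm_eq_sqrt_re_inner (𝕜 := ℂ), Q.inner_cyclicVector_self, RCLike.one_re, Real.sqrt_one]

lemma inner_DeltahatOp_cyclicVector {y : B H} (hy : y ∈ Q.Mhat) (a c : H) :
    ⟪Q.square.tmul Q.cyclicVector a, Q.DeltahatOp y (Q.square.tmul Q.cyclicVector c)⟫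
      = ⟪a, c⟫ * Q.phihat y := by
  rw [← phihat_slice_swap_DeltahatOp hy, phihat_eq_inner (slice_swap_DeltahatOp_mem hy a c),
    Q.square.swap.inner_slice, HilbertTensor.swap_tmul, HilbertTensor.swap_tmul]

lemma eq_smul_one_of_mem_commutant {y : B H} (hy : y ∈ Q.Mhat) (hy' : y ∈ Q.M.commutant) :
    y = Q.phihat y • (1 : B H) := by
  have hDelta : Q.DeltahatOp y = Q.square.ampL y := by
    rw [LCQG.DeltahatOp, (LCQG.W_commute_ampL hy').eq, mul_assoc, Q.W_unitary_r, mul_one]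
  refine ContinuousLinearMap.ext fun c => ext_inner_left ℂ fun a => ?_
  have h := phihat_slice_DeltahatOp hy a c
  rw [hDelta, Q.square.slice_ampL, map_smul, Q.phihat_state.1, smul_eq_mul, mul_one] at h
  rw [h, smul_apply, one_apply_eq_self, inner_smul_right, mul_comm]

lemma eq_smul_one_of_mem {x : B H} (hx : x ∈ Q.M) (hx' : x ∈ Q.Mhat) :
    x = Q.phihat x • (1 : B H) := by
  have hDelta : Q.Delta x = Q.square.ampL x := by
    rw [LCQG.Delta_eq_V_conj hx, (LCQG.V_commute_ampL hx').eq, mul_assoc, Q.V_unitary_r, mul_one]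
  have hDeltahatOp : Q.DeltahatOp x = Q.square.ampR x := by
    rw [LCQG.DeltahatOp, ← hDelta, Q.Delta_eq, ← mul_assoc, ← mul_assoc, Q.W_unitary_r, one_mul,
      mul_assoc, Q.W_unitary_r, mul_one]
  refine ContinuousLinearMap.ext fun c => ext_inner_left ℂ fun a => ?_
  have h := phihat_slice_swap_DeltahatOp hx' a c
  rw [hDeltahatOp, show Q.square.ampR x = Q.square.swap.ampL x from rfl,
    Q.square.swap.slice_ampL, map_smul, Q.phihat_state.1, smul_eq_mul, mul_one] at h
  rw [h, smul_apply, one_apply_eq_self, inner_smul_right, mul_comm]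

end DiscreteKacQG

end QuantumGroup

section Pentagon

variable {H H2 K : Type*}
  [NormedAddCommGroup H] [InnerProductSpace ℂ H] [CompleteSpace H]
  [NormedAddCommGroup H2] [InnerProductSpace ℂ H2] [CompleteSpace H2]
  [NormedAddCommGroup K] [InnerProductSpace ℂ K] [CompleteSpace K]

lemma semiconjBy_star_of_mem_unitary {A : Type*} [Monoid A] [StarMul A] {u x y : A}
    (hu : u ∈ unitary A) (h : SemiconjBy u x y) : SemiconjBy (star u) y x :=
  SemiconjBy.units_inv_symm_left (a := Unitary.toUnits ⟨u, hu⟩) h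

namespace HilbertTensor

variable {H₁ H₂ : Type*}
  [NormedAddCommGroup H₁] [InnerProductSpace ℂ H₁] [CompleteSpace H₁]
  [NormedAddCommGroup H₂] [InnerProductSpace ℂ H₂] [CompleteSpace H₂]
  (P : HilbertTensor H₁ H₂ K)

lemma eq_smul_one_of_slice {X : B K} {l : H₁ → H₁ → ℂ} {m : H₂ → H₂ → ℂ}
    (hl : ∀ a c, P.slice X a c = l a c • 1) (hm : ∀ b d, P.swap.slice X b d = m b d • 1)
    {v : H₂} (hv : ⟪v, v⟫ = 1) : X = m v v • 1 := by
  have inner_left : ∀ a b c d, ⟪P.tmul a b, X (P.tmul c d)⟫ = l a c * ⟪b, d⟫ := fun a b c d => by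
    rw [← inner_slice, hl, smul_apply, one_apply_eq_self, inner_smul_right]
  have inner_right : ∀ a b c d, ⟪P.tmul a b, X (P.tmul c d)⟫ = m b d * ⟪a, c⟫ := fun a b c d => by
    rw [← P.swap_tmul, ← P.swap_tmul, ← inner_slice, hm, smul_apply, one_apply_eq_self,
      inner_smul_right]
  refine P.operator_ext fun a b c d => ?_
  have hlm : l a c = m v v * ⟪a, c⟫ := by
    rw [← inner_right, inner_left, hv, mul_one]
  rw [inner_left, hlm, smul_apply, one_apply_eq_self, inner_smul_right, inner_tmul, mul_assoc]

lemma eq_ampL_of_slice {X : B K} {l : H₁ → H₁ → ℂ} (hl : ∀ a c, P.slice X a c = l a c • 1)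
    {v : H₂} (hv : ⟪v, v⟫ = 1) : X = P.ampL (P.swap.slice X v v) := by
  refine P.slice_ext fun a c => ?_
  rw [slice_ampL, inner_slice, swap_tmul, swap_tmul, ← inner_slice, hl, smul_apply,
    one_apply_eq_self, inner_smul_right, hv, mul_one]

lemma norm_apply_of_ampL_mem_unitary {x : B H₁} (hx : P.ampL x ∈ unitary (B K)) {v : H₂}
    (hv : ‖v‖ = 1) (a : H₁) : ‖x a‖ = ‖a‖ := by
  have h := ContinuousLinearMap.norm_map_of_mem_unitary hx (P.tmul a v)
  rwa [ampL_tmul, norm_tmul, norm_tmul, hv, mul_one, mul_one] at h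

end HilbertTensor

namespace LCQG

section

variable (Q : LCQG H H2)

lemma semiconjBy_W (x : B H) : SemiconjBy Q.W (Q.Delta x) (Q.square.ampR x) := by
  rw [SemiconjBy, Delta_eq, ← mul_assoc, ← mul_assoc, Q.W_unitary_r, one_mul]

lemma semiconjBy_V {x : B H} (hx : x ∈ Q.M) : SemiconjBy Q.V (Q.square.ampL x) (Q.Delta x) := by
  rw [SemiconjBy, Delta_eq_V_conj hx, mul_assoc, Q.V_unitary_l, mul_one]

end

variable (Q : LCQG H H2) (L : HilbertTensor H H2 K)

/-- Leg numbering `X ↦ X₁₂` on the tensor cube `K = L²(𝔾) ⊗ (L²(𝔾) ⊗ L²(𝔾))`; correspondingly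
`X₂₃` is `L.ampR X`. -/
def leg12 : B H2 →⋆ₐ[ℂ] B K := (HilbertTensor.assoc Q.square Q.square L).ampL

/-- Leg numbering `X ↦ X₁₃ = Σ₂₃ X₁₂ Σ₂₃`. -/
def leg13 (X : B H2) : B K := L.ampR Q.flipU * Q.leg12 L X * L.ampR Q.flipU

/-- The unitary `W₁₂* W₂₃ W₁₂ W₂₃* W₁₃*`, which is `1` precisely when `W` satisfies the pentagon
equation. -/
def pentagonDefect : B K :=
  star (Q.leg12 L Q.W) * L.ampR Q.W * Q.leg12 L Q.W * star (L.ampR Q.W) * star (Q.leg13 L Q.W)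

lemma leg12_mem_unitary : Q.leg12 L Q.W ∈ unitary (B K) :=
  Unitary.map_mem (Q.leg12 L) Q.W_mem_unitary

lemma leg23_mem_unitary : L.ampR Q.W ∈ unitary (B K) := Unitary.map_mem L.ampR Q.W_mem_unitary

lemma leg13_mem_unitary : Q.leg13 L Q.W ∈ unitary (B K) :=
  mul_mem (mul_mem (Unitary.map_mem L.ampR Q.flipU_mem_unitary) (Q.leg12_mem_unitary L))
    (Unitary.map_mem L.ampR Q.flipU_mem_unitary)

lemma pentagonDefect_mem_unitary : Q.pentagonDefect L ∈ unitary (B K) :=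
  mul_mem (mul_mem (mul_mem (mul_mem (Unitary.star_mem (Q.leg12_mem_unitary L))
    (Q.leg23_mem_unitary L)) (Q.leg12_mem_unitary L)) (Unitary.star_mem (Q.leg23_mem_unitary L)))
      (Unitary.star_mem (Q.leg13_mem_unitary L))

lemma leg12_commute_ampR_ampR (X : B H2) (x : B H) :
    Commute (Q.leg12 L X) (L.ampR (Q.square.ampR x)) := by
  rw [← HilbertTensor.assoc_ampR Q.square]
  exact HilbertTensor.commute_ampL_ampR _ _ _

lemma leg12_semiconjBy {X Y : B H2} {x : B H} (h : SemiconjBy X Y (Q.square.ampR x)) :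
    SemiconjBy (Q.leg12 L X) (Q.leg12 L Y) (L.ampR (Q.square.ampL x)) :=
  HilbertTensor.assoc_ampL_ampR Q.square Q.square L x ▸ h.map (Q.leg12 L)

lemma leg12_commute_ampR_ampL {X : B H2} {x : B H} (h : Commute X (Q.square.ampR x)) :
    Commute (Q.leg12 L X) (L.ampR (Q.square.ampL x)) :=
  HilbertTensor.assoc_ampL_ampR Q.square Q.square L x ▸ h.map (Q.leg12 L)

lemma leg13_commute_ampR_ampL (X : B H2) (x : B H) :
    Commute (Q.leg13 L X) (L.ampR (Q.square.ampL x)) :=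
  (((Q.semiconjBy_flipU_ampR x).map L.ampR).mul_left (Q.leg12_commute_ampR_ampR L X x)).mul_left
    ((Q.semiconjBy_flipU_ampL x).map L.ampR)

lemma leg13_commute_ampR_ampR {X : B H2} {x : B H} (h : Commute X (Q.square.ampR x)) :
    Commute (Q.leg13 L X) (L.ampR (Q.square.ampR x)) :=
  (((Q.semiconjBy_flipU_ampL x).map L.ampR).mul_left (Q.leg12_commute_ampR_ampL L h)).mul_left
    ((Q.semiconjBy_flipU_ampR x).map L.ampR)

variable {Q}

lemma pentagonDefect_commute_ampL_of_mem_commutant_M {b : B H} (hb : b ∈ Q.M.commutant) :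
    Commute (Q.pentagonDefect L) (L.ampR (Q.square.ampL b)) := by
  have hW12 : SemiconjBy (Q.leg12 L Q.W) (L.ampR (Q.square.ampL b))
      (Q.leg12 L (Q.W * Q.square.ampR b * star Q.W)) := by
    rw [← HilbertTensor.assoc_ampL_ampR Q.square Q.square L]
    refine SemiconjBy.map ?_ (Q.leg12 L)
    rw [SemiconjBy, mul_assoc, Q.W_unitary_l, mul_one]
  have hW23 : Commute (L.ampR Q.W) (Q.leg12 L (Q.W * Q.square.ampR b * star Q.W)) := by
    refine (HilbertTensor.commute_assoc_ampL_ampR _ _ _ Q.M.commutant (fun x hx => ?_)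
      fun y hy => W_commute_ampL hy).symm
    rw [VonNeumannAlgebra.commutant_commutant] at hx
    exact ((Q.semiconjBy_W x).mul_left (Delta_commute_ampR hx hb).symm).mul_left
      (semiconjBy_star_of_mem_unitary Q.W_mem_unitary (Q.semiconjBy_W x))
  exact ((((semiconjBy_star_of_mem_unitary (Q.leg12_mem_unitary L) hW12).mul_left hW23).mul_left
    hW12).mul_left (semiconjBy_star_of_mem_unitary (Q.leg23_mem_unitary L)
      ((W_commute_ampL hb).map L.ampR))).mul_left
    (semiconjBy_star_of_mem_unitary (Q.leg13_mem_unitary L) (Q.leg13_commute_ampR_ampL L Q.W b))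

lemma pentagonDefect_commute_ampR_of_mem_commutant_Mhat {b : B H} (hb : b ∈ Q.Mhat.commutant) :
    Commute (Q.pentagonDefect L) (L.ampR (Q.square.ampR b)) := by
  have hW12 := Q.leg12_commute_ampR_ampR L Q.W b
  have hW23 : Commute (L.ampR Q.W) (L.ampR (Q.square.ampR b)) := (W_commute_ampR hb).map L.ampR
  exact ((((semiconjBy_star_of_mem_unitary (Q.leg12_mem_unitary L) hW12).mul_left hW23).mul_left
    hW12).mul_left (semiconjBy_star_of_mem_unitary (Q.leg23_mem_unitary L) hW23)).mul_left
    (semiconjBy_star_of_mem_unitary (Q.leg13_mem_unitary L)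
      (Q.leg13_commute_ampR_ampR L (W_commute_ampR hb)))

variable (Q) in
lemma pentagonDefect_eq_mul_V : Q.pentagonDefect L
    = star (Q.leg12 L Q.W) * L.ampR Q.W * L.ampR Q.V * Q.leg12 L Q.W
      * L.ampR (star Q.V * star Q.W * Q.flipU) * star (Q.leg12 L Q.W) * L.ampR Q.flipU := by
  have hV : Commute (Q.leg12 L Q.W) (L.ampR Q.V) :=
    HilbertTensor.commute_assoc_ampL_ampR _ _ _ Q.Mhat (fun _ => W_commute_ampR)
      fun _ => V_commute_ampL
  have hflip : L.ampR Q.flipU * L.ampR Q.flipU = 1 := by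
    rw [← map_mul, flipU_mul_self, map_one]
  have hW : star (L.ampR Q.W)
      = L.ampR Q.V * L.ampR (star Q.V * star Q.W * Q.flipU) * L.ampR Q.flipU := by
    rw [← map_mul, ← map_mul, ← map_star, ← mul_assoc, ← mul_assoc, Q.V_unitary_r, one_mul,
      mul_assoc, flipU_mul_self, mul_one]
  rw [pentagonDefect, leg13, star_mul, star_mul, ← map_star L.ampR Q.flipU, star_flipU, hW]
  simp only [mul_assoc]
  rw [← mul_assoc (L.ampR Q.flipU) (L.ampR Q.flipU), hflip, one_mul, hV.left_comm]

lemma star_V_star_W_flipU_commute_ampL {x : B H} (hx : x ∈ Q.M) :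
    Commute (star Q.V * star Q.W * Q.flipU) (Q.square.ampL x) :=
  ((semiconjBy_star_of_mem_unitary Q.V_mem_unitary (Q.semiconjBy_V hx)).mul_left
    (semiconjBy_star_of_mem_unitary Q.W_mem_unitary (Q.semiconjBy_W x))).mul_left
    (Q.semiconjBy_flipU_ampL x)

-- Both `W` and `V` implement `Δ`, so `V₂₃` and `W₂₃` together carry `x` from leg 2 to leg 3.
lemma pentagonDefect_commute_ampR_of_mem_M {x : B H} (hx : x ∈ Q.M) :
    Commute (Q.pentagonDefect L) (L.ampR (Q.square.ampR x)) := by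
  have hW12 := Q.leg12_semiconjBy L (Q.semiconjBy_W x)
  have hWV : Commute (L.ampR (star Q.V * star Q.W * Q.flipU)) (Q.leg12 L (Q.Delta x)) :=
    (HilbertTensor.commute_assoc_ampL_ampR _ _ _ Q.M (fun _ => Delta_commute_ampR hx)
      fun _ => star_V_star_W_flipU_commute_ampL).symm
  rw [pentagonDefect_eq_mul_V]
  exact ((((((semiconjBy_star_of_mem_unitary (Q.leg12_mem_unitary L)
    (Q.leg12_commute_ampR_ampR L Q.W x)).mul_left ((Q.semiconjBy_W x).map L.ampR)).mul_left
    ((Q.semiconjBy_V hx).map L.ampR)).mul_left hW12).mul_left hWV).mul_left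
    (semiconjBy_star_of_mem_unitary (Q.leg12_mem_unitary L) hW12)).mul_left
    ((Q.semiconjBy_flipU_ampR x).map L.ampR)

lemma swap_bra_ampR_flipU (v : H2) (d ζ : H) :
    (HilbertTensor.assoc Q.square Q.square L).swap.bra ζ
        (L.ampR Q.flipU ((HilbertTensor.assoc Q.square Q.square L).tmul v d))
      = Q.square.tmul (Q.square.swap.bra ζ v) d := by
  set L' := HilbertTensor.assoc Q.square Q.square L
  have h : L'.swap.bra ζ ∘L L.ampR Q.flipU ∘L L'.swap.ket d
      = Q.square.swap.ket d ∘L Q.square.swap.bra ζ := Q.square.clm_ext fun a b => by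
    simp only [ContinuousLinearMap.comp_apply, HilbertTensor.ket_apply, HilbertTensor.swap_tmul]
    rw [HilbertTensor.assoc_tmul, HilbertTensor.ampR_tmul, flipU_tmul,
      ← HilbertTensor.assoc_tmul Q.square, ← L'.swap_tmul, HilbertTensor.bra_tmul,
      ← Q.square.swap_tmul a b, HilbertTensor.bra_tmul, map_smul, LinearMap.smul_apply]
  exact DFunLike.congr_fun h v

end LCQG

namespace DiscreteKacQG

variable {Q : DiscreteKacQG H H2} (L : HilbertTensor H H2 K)

lemma pentagonDefect_commute_ampL_of_mem_commutant_Mhat {b : B H} (hb : b ∈ Q.Mhat.commutant) :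
    Commute (Q.pentagonDefect L) (L.ampR (Q.square.ampL b)) := by
  have hW23 : SemiconjBy (L.ampR Q.W) (L.ampR (star Q.W * Q.square.ampL b * Q.W))
      (L.ampR (Q.square.ampL b)) := by
    refine SemiconjBy.map ?_ L.ampR
    rw [SemiconjBy, ← mul_assoc, ← mul_assoc, Q.W_unitary_r, one_mul]
  have hW12 : Commute (Q.leg12 L Q.W) (L.ampR (star Q.W * Q.square.ampL b * Q.W)) := by
    refine HilbertTensor.commute_assoc_ampL_ampR _ _ _ Q.Mhat (fun _ => LCQG.W_commute_ampR)
      fun y hy => ?_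
    have hW : SemiconjBy Q.W (Q.square.ampL y) (Q.DeltahatOp y) := by
      rw [SemiconjBy, LCQG.DeltahatOp, mul_assoc, Q.W_unitary_l, mul_one]
    exact ((semiconjBy_star_of_mem_unitary Q.W_mem_unitary hW).mul_left
      (DeltahatOp_commute_ampL hy hb).symm).mul_left hW
  exact ((((semiconjBy_star_of_mem_unitary (Q.leg12_mem_unitary L)
    (Q.leg12_commute_ampR_ampL L (LCQG.W_commute_ampR hb))).mul_left hW23).mul_left
    hW12).mul_left (semiconjBy_star_of_mem_unitary (Q.leg23_mem_unitary L) hW23)).mul_left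
    (semiconjBy_star_of_mem_unitary (Q.leg13_mem_unitary L) (Q.leg13_commute_ampR_ampL L Q.W b))

lemma eq_smul_one_of_commute {S : B H2}
    (hL : ∀ b ∈ Q.Mhat.commutant, Commute S (Q.square.ampL b))
    (hL' : ∀ b ∈ Q.M.commutant, Commute S (Q.square.ampL b))
    (hR : ∀ b ∈ Q.Mhat.commutant, Commute S (Q.square.ampR b))
    (hR' : ∀ x ∈ Q.M, Commute S (Q.square.ampR x)) : ∃ r : ℂ, S = r • (1 : B H2) := by
  refine ⟨_, Q.square.eq_smul_one_of_slice
    (fun a c => eq_smul_one_of_mem_commutant (Q := Q) (mem_iff_forall_commute.2 fun b hb => ?_)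
      (mem_commutant_iff_forall_commute.2 fun x hx => ?_))
    (fun b d => eq_smul_one_of_mem (Q := Q) (mem_iff_forall_commute.2 fun y hy => ?_)
      (mem_iff_forall_commute.2 fun y hy => ?_)) Q.inner_cyclicVector_self⟩
  · exact Q.square.commute_ampR_iff.1 (hR b hb) a c
  · exact Q.square.commute_ampR_iff.1 (hR' x hx) a c
  · exact Q.square.swap.commute_ampR_iff.1 (hL' y hy) b d
  · exact Q.square.swap.commute_ampR_iff.1 (hL y hy) b d

variable (Q)

lemma exists_pentagonDefect_eq_ampL :
    ∃ z : B H, Q.pentagonDefect L = L.ampL z ∧ ∀ h, ‖z h‖ = ‖h‖ := by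
  have h_slice : ∀ a c, ∃ r : ℂ, L.slice (Q.pentagonDefect L) a c = r • (1 : B H2) :=
    fun a c => eq_smul_one_of_commute
      (fun b hb =>
        L.commute_ampR_iff.1 (pentagonDefect_commute_ampL_of_mem_commutant_Mhat L hb) a c)
      (fun b hb => L.commute_ampR_iff.1
        (LCQG.pentagonDefect_commute_ampL_of_mem_commutant_M L hb) a c)
      (fun b hb => L.commute_ampR_iff.1
        (LCQG.pentagonDefect_commute_ampR_of_mem_commutant_Mhat L hb) a c)
      (fun x hx => L.commute_ampR_iff.1 (LCQG.pentagonDefect_commute_ampR_of_mem_M L hx) a c)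
  choose r hr using h_slice
  set v := Q.square.tmul Q.cyclicVector Q.cyclicVector
  have hv : ⟪v, v⟫ = 1 := by
    rw [Q.square.inner_tmul, inner_cyclicVector_self, mul_one]
  have hv_norm : ‖v‖ = 1 := by rw [Q.square.norm_tmul, norm_cyclicVector, mul_one]
  have hz := L.eq_ampL_of_slice hr hv
  exact ⟨_, hz, L.norm_apply_of_ampL_mem_unitary (hz ▸ Q.pentagonDefect_mem_unitary L) hv_norm⟩

-- The coefficients of the pentagon equation `(id ⊗ Δ̂ᵒᵖ)(W) = W₁₂ W₁₃`, with an isometry `z₁`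
-- inserted between the two factors on the right.
lemma exists_isometry_inner_DeltahatOp_slice_W : ∃ z : B H, (∀ h, ‖z h‖ = ‖h‖) ∧
    ∀ e k c d ζ w : H,
      ⟪Q.square.tmul w ζ, Q.DeltahatOp (Q.square.slice Q.W e k) (Q.square.tmul d c)⟫
        = ⟪w, Q.square.slice Q.W e (z (Q.square.swap.bra ζ (Q.W (Q.square.tmul k c)))) d⟫ := by
  set L := HilbertTensor.ofCompletion H H2
  set L' := HilbertTensor.assoc Q.square Q.square L
  obtain ⟨z, hz, hz_norm⟩ := Q.exists_pentagonDefect_eq_ampL L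
  refine ⟨z, hz_norm, fun e k c d ζ w => ?_⟩
  have h_pentagon : L.ampR Q.W * Q.leg12 L Q.W * star (L.ampR Q.W)
      = Q.leg12 L Q.W * L.ampL z * Q.leg13 L Q.W := by
    have h12 := Unitary.mul_star_self_of_mem (Q.leg12_mem_unitary L)
    have h13 := Unitary.star_mul_self_of_mem (Q.leg13_mem_unitary L)
    rw [← hz, LCQG.pentagonDefect]
    simp only [mul_assoc, h13, mul_one]
    rw [← mul_assoc (Q.leg12 L Q.W) (star _), h12, one_mul]
  have h_slice : Q.DeltahatOp (Q.square.slice Q.W e k)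
      = L.slice (Q.leg12 L Q.W * L.ampL z * Q.leg13 L Q.W) e k := by
    rw [← h_pentagon, ← map_star, L.slice_mul_ampR, L.slice_ampR_mul, LCQG.leg12,
      HilbertTensor.slice_assoc_ampL]
    rfl
  have h_leg13 : Q.leg13 L Q.W (L.tmul k (Q.square.tmul d c))
      = L.ampR Q.flipU (L'.tmul (Q.W (Q.square.tmul k c)) d) := by
    rw [LCQG.leg13, mul_apply_eq_comp, mul_apply_eq_comp, L.ampR_tmul, LCQG.flipU_tmul,
      ← HilbertTensor.assoc_tmul Q.square, LCQG.leg12, HilbertTensor.ampL_tmul]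
  rw [h_slice, L.inner_slice, Q.square.inner_slice, mul_apply_eq_comp, mul_apply_eq_comp, h_leg13,
    ← HilbertTensor.assoc_tmul Q.square, ← L'.swap_tmul, ← L'.swap.inner_bra_right, LCQG.leg12,
    ← HilbertTensor.assoc_ampL_ampL Q.square Q.square L,
    show L'.ampL = L'.swap.ampR from rfl, L'.swap.bra_ampR, L'.swap.bra_ampR,
    LCQG.swap_bra_ampR_flipU, Q.square.ampL_tmul]

end DiscreteKacQG

end Pentagon

section Orthogonality

lemma hasSum_comm_of_nonneg {ι κ : Type*} {f : ι → κ → ℝ} {r : ι → ℝ} {s : κ → ℝ} {T : ℝ}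
    (hf : ∀ i j, 0 ≤ f i j) (hr : ∀ i, HasSum (f i) (r i))
    (hs : ∀ j, HasSum (fun i => f i j) (s j)) (hT : HasSum r T) : HasSum s T := by
  have h_summable : Summable fun q : ι × κ => f q.1 q.2 :=
    (summable_prod_of_nonneg fun q => hf q.1 q.2).2 ⟨fun i => (hr i).summable,
      hT.summable.congr fun i => (hr i).tsum_eq.symm⟩
  have h_sum : HasSum (fun q : ι × κ => f q.1 q.2) T :=
    (h_summable.hasSum.prod_fiberwise hr).unique hT ▸ h_summable.hasSum
  exact ((Equiv.prodComm κ ι).hasSum_iff.2 h_sum).prod_fiberwise hs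

variable {ι H H2 : Type*}
  [NormedAddCommGroup H] [InnerProductSpace ℂ H] [CompleteSpace H]
  [NormedAddCommGroup H2] [InnerProductSpace ℂ H2] [CompleteSpace H2]

omit [CompleteSpace H] in
lemma hasSum_norm_inner_sq (e : HilbertBasis ι ℂ H) (v : H) :
    HasSum (fun i => ‖⟪e i, v⟫‖ ^ 2) (‖v‖ ^ 2) := by
  have h := e.hasSum_inner_mul_inner v v
  simp only [← inner_conj_symm v (e _), RCLike.conj_mul, inner_self_eq_norm_sq_to_K] at h
  exact_mod_cast h

namespace LCQG

variable (Q : LCQG H H2)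

lemma star_DeltahatOp (y : B H) : star (Q.DeltahatOp y) = Q.DeltahatOp (star y) := by
  rw [DeltahatOp, DeltahatOp, star_mul, star_mul, star_star, map_star, mul_assoc]

lemma DeltahatOp_mul (x y : B H) : Q.DeltahatOp (x * y) = Q.DeltahatOp x * Q.DeltahatOp y := by
  simp only [DeltahatOp, map_mul, mul_assoc]
  rw [← mul_assoc (star Q.W) Q.W, Q.W_unitary_l, one_mul]

end LCQG

namespace DiscreteKacQG

variable {Q : DiscreteKacQG H H2}

lemma phihat_star_mul_self {b : B H} (hb : b ∈ Q.Mhat) :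
    Q.phihat (star b * b) = (‖b Q.cyclicVector‖ : ℂ) ^ 2 := by
  rw [phihat_eq_inner (mul_mem (star_mem hb) hb), mul_apply_eq_comp,
    star_inner_right]
  exact inner_self_eq_norm_sq_to_K _

lemma norm_star_apply_cyclicVector {b : B H} (hb : b ∈ Q.Mhat) :
    ‖star b Q.cyclicVector‖ = ‖b Q.cyclicVector‖ := by
  have h := phihat_star_mul_self (star_mem hb)
  rw [star_star, Q.phihat_tracial _ hb _ (star_mem hb), phihat_star_mul_self hb] at h
  exact ((sq_eq_sq₀ (norm_nonneg _) (norm_nonneg _)).1 (by exact_mod_cast h)).symm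

lemma norm_DeltahatOp_cyclicVector {y : B H} (hy : y ∈ Q.Mhat) (ζ : H) :
    ‖Q.DeltahatOp y (Q.square.tmul Q.cyclicVector ζ)‖ = ‖y Q.cyclicVector‖ * ‖ζ‖ := by
  have h := inner_DeltahatOp_cyclicVector (mul_mem (star_mem hy) hy) ζ ζ
  rw [Q.DeltahatOp_mul, ← Q.star_DeltahatOp, mul_apply_eq_comp, phihat_star_mul_self hy,
    star_inner_right, inner_self_eq_norm_sq_to_K, inner_self_eq_norm_sq_to_K, ← mul_pow,
    mul_comm] at h
  simp only [Complex.coe_algebraMap] at h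
  exact (sq_eq_sq₀ (norm_nonneg _) (by positivity)).1 (by exact_mod_cast h)

variable (Q) (e : HilbertBasis ι ℂ H)

lemma hasSum_norm_star_slice_W_cyclicVector (k : H) :
    HasSum (fun i => ‖star (Q.square.slice Q.W (e i) k) Q.cyclicVector‖ ^ 2) (‖k‖ ^ 2) := by
  have h := Q.square.hasSum_norm_bra_sq e (Q.W (Q.square.tmul k Q.cyclicVector))
  rw [ContinuousLinearMap.norm_map_of_mem_unitary Q.W_mem_unitary, Q.square.norm_tmul,
    norm_cyclicVector, mul_one] at h
  exact h.congr_fun fun i => by rw [norm_star_apply_cyclicVector (LCQG.slice_W_mem _ _)]; rfl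

-- The Schur orthogonality relation at `Ω` is carried to an arbitrary vector `ζ` by evaluating
-- `∑ᵢ ‖Δ̂ᵒᵖ(uᵢ*)(Ω ⊗ ζ)‖²` in two ways, through the trace and through the pentagon equation.
lemma hasSum_norm_star_slice_W (k ζ : H) :
    HasSum (fun i => ‖star (Q.square.slice Q.W (e i) k) ζ‖ ^ 2) (‖k‖ ^ 2 * ‖ζ‖ ^ 2) := by
  obtain ⟨z, hz, h_pentagon⟩ := Q.exists_isometry_inner_DeltahatOp_slice_W
  let f : H → H := fun c => Q.square.swap.bra ζ (Q.W (Q.square.tmul k c))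
  have h_bra : ∀ i c, Q.square.swap.bra c
      (Q.DeltahatOp (star (Q.square.slice Q.W (e i) k)) (Q.square.tmul Q.cyclicVector ζ))
        = star (Q.square.slice Q.W (e i) (z (f c))) Q.cyclicVector := fun i c => by
    refine ext_inner_left ℂ fun d => ?_
    rw [HilbertTensor.inner_bra_right, ← Q.star_DeltahatOp, star_inner_right, star_inner_right,
      HilbertTensor.swap_tmul, ← inner_conj_symm, h_pentagon, inner_conj_symm]
  have h_coeff : HasSum (fun j => ‖f (e j)‖ ^ 2) (‖k‖ ^ 2 * ‖ζ‖ ^ 2) := by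
    refine hasSum_comm_of_nonneg
      (f := fun i j => ‖star (Q.square.slice Q.W (e i) (z (f (e j)))) Q.cyclicVector‖ ^ 2)
      (fun _ _ => sq_nonneg _) (fun i => ?_)
      (fun j => hz (f (e j)) ▸ Q.hasSum_norm_star_slice_W_cyclicVector e _)
      ((Q.hasSum_norm_star_slice_W_cyclicVector e k).mul_right _)
    have h := Q.square.swap.hasSum_norm_bra_sq e
      (Q.DeltahatOp (star (Q.square.slice Q.W (e i) k)) (Q.square.tmul Q.cyclicVector ζ))
    simpa only [h_bra, norm_DeltahatOp_cyclicVector (star_mem (LCQG.slice_W_mem _ _)), mul_pow]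
      using h
  refine hasSum_comm_of_nonneg (f := fun j i => ‖⟪e i, f (e j)⟫‖ ^ 2) (fun _ _ => sq_nonneg _)
    (fun j => hasSum_norm_inner_sq e _) (fun i => ?_) h_coeff
  refine (hasSum_norm_inner_sq e (star (Q.square.slice Q.W (e i) k) ζ)).congr_fun fun j => ?_
  rw [HilbertTensor.inner_bra_right, HilbertTensor.swap_tmul, ← Q.square.inner_slice,
    star_inner_right, norm_inner_symm]

lemma hasSum_inner_star_slice_W (k ζ ζ' : H) :
    HasSum (fun i => ⟪star (Q.square.slice Q.W (e i) k) ζ, star (Q.square.slice Q.W (e i) k) ζ'⟫)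
      (⟪k, k⟫ * ⟪ζ, ζ'⟫) := by
  have h_polar (a b : H) : ⟪a, b⟫ = ((‖a + b‖ : ℂ) ^ 2 - (‖a - b‖ : ℂ) ^ 2 +
      ((‖a - Complex.I • b‖ : ℂ) ^ 2 - (‖a + Complex.I • b‖ : ℂ) ^ 2) * Complex.I) / 4 :=
    inner_eq_sum_norm_sq_div_four (𝕜 := ℂ) a b
  have h_sq (v : H) : HasSum (fun i => (‖star (Q.square.slice Q.W (e i) k) v‖ : ℂ) ^ 2)
      (⟪k, k⟫ * (‖v‖ : ℂ) ^ 2) := by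
    simp only [inner_self_eq_norm_sq_to_K, Complex.coe_algebraMap]
    exact_mod_cast Complex.hasSum_ofReal.2 (Q.hasSum_norm_star_slice_W e k v)
  have h := (((h_sq (ζ + ζ')).sub (h_sq (ζ - ζ'))).add
    (((h_sq (ζ - Complex.I • ζ')).sub (h_sq (ζ + Complex.I • ζ'))).mul_right Complex.I)).div_const 4
  simp only [map_add, map_sub, map_smul] at h
  simpa only [← mul_sub, mul_assoc, ← mul_add, mul_div_assoc, ← h_polar] using h

lemma hasSum_phihat_star_mul_mul_slice_W (k : H) {y : B H} (hy : y ∈ Q.Mhat) :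
    HasSum (fun i => Q.phihat
      (star (Q.square.slice Q.W (e i) k) * y * Q.square.slice Q.W (e i) k))
      (⟪k, k⟫ * Q.phihat y) := by
  have h := Q.hasSum_inner_star_slice_W e k (star y Q.cyclicVector) Q.cyclicVector
  rw [star_inner_left, ← phihat_eq_inner hy] at h
  refine h.congr_fun fun i => ?_
  have hu : Q.square.slice Q.W (e i) k ∈ Q.Mhat := LCQG.slice_W_mem _ _
  rw [mul_assoc, Q.phihat_tracial _ (star_mem hu) _ (mul_mem hy hu),
    phihat_eq_inner (mul_mem (mul_mem hy hu) (star_mem hu)), star_inner_left, star_inner_left,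
    mul_assoc, mul_apply_eq_comp, mul_apply_eq_comp]

end DiscreteKacQG

end Orthogonality

section JordanProjection

open NormedSpace

variable {A : Type*} [CStarAlgebra A]

lemma exp_add_smul (a : A) (c d : ℂ) : exp ((c + d) • a) = exp (c • a) * exp (d • a) := by
  let _ : NormedAlgebra ℚ A := .restrictScalars ℚ ℂ A
  rw [add_smul, exp_add_of_commute (((Commute.refl a).smul_left c).smul_right d)]

lemma exp_smul_mul_exp_neg_smul (a : A) (c : ℂ) : exp (c • a) * exp (-c • a) = 1 := by
  rw [← exp_add_smul, add_neg_cancel, zero_smul, exp_zero]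

lemma hasDerivAt_exp_smul_zero (a : A) : HasDerivAt (fun z : ℂ => exp (z • a)) a 0 := by
  simpa only [zero_smul, exp_zero, one_mul] using hasDerivAt_exp_smul_const a (0 : ℂ)

lemma exp_add_smul_conj (a x : A) (c d : ℂ) :
    exp ((c + d) • a) * x * exp ((c + d) • a) =
      exp (c • a) * (exp (d • a) * x * exp (d • a)) * exp (c • a) := by
  nth_rewrite 2 [add_comm]
  simp only [exp_add_smul, mul_assoc]

lemma norm_exp_mul_I_smul_conj {a : A} (ha : IsSelfAdjoint a) (s : ℝ) (x : A) :
    ‖exp ((s * Complex.I) • a) * x * exp ((s * Complex.I) • a)‖ = ‖x‖ := by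
  let _ : NormedAlgebra ℚ A := .restrictScalars ℚ ℂ A
  have hu : exp ((s * Complex.I) • a) ∈ unitary A := by
    refine exp_mem_unitary_of_mem_skewAdjoint (ha.smul_mem_skewAdjoint ?_)
    simp [skewAdjoint.mem_iff]
  rw [CStarRing.norm_mul_mem_unitary _ hu, CStarRing.norm_mem_unitary_mul _ hu]

variable [PartialOrder A] [StarOrderedRing A]

lemma norm_apply_le_of_positive (T : A →ₚ[ℂ] A) (x : A) : ‖T x‖ ≤ 4 * ‖T 1‖ * ‖x‖ := by
  obtain ⟨y, hy, hyx, hx⟩ := CStarAlgebra.exists_sum_four_nonneg x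
  calc ‖T x‖ = ‖∑ i : Fin 4, Complex.I ^ (i : ℕ) • T (y i)‖ := by
        conv_lhs => rw [hx]
        simp only [map_sum, map_smul]
    _ ≤ ∑ _i : Fin 4, ‖T 1‖ * ‖x‖ := by
        refine (norm_sum_le _ _).trans (Finset.sum_le_sum fun i _ => ?_)
        rw [norm_smul, norm_pow, Complex.norm_I, one_pow, one_mul]
        exact (T.norm_apply_le_of_nonneg _ (hy i)).trans (by gcongr; exact hyx i)
    _ = 4 * ‖T 1‖ * ‖x‖ := by
        rw [Finset.sum_const, Finset.card_univ, Fintype.card_fin, nsmul_eq_mul, mul_assoc]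
        norm_num

lemma norm_conj_apply_conj_le (E : A →ₚ[ℂ] A) {p q : A} (hp : IsSelfAdjoint p)
    (hq : IsSelfAdjoint q) (y : A) :
    ‖q * E (p * y * p) * q‖ ≤ 4 * ‖q * E (p * p) * q‖ * ‖y‖ := by
  let T : A →ₚ[ℂ] A := .mk₀ (LinearMap.mulLeftRight ℂ (q, q) ∘ₗ E.toLinearMap ∘ₗ
    LinearMap.mulLeftRight ℂ (p, p)) fun x hx =>
      hq.conjugate_nonneg (E.map_nonneg (hp.conjugate_nonneg hx))
  have h : T 1 = q * E (p * p) * q := by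
    change q * E (p * 1 * p) * q = _
    rw [mul_one]
  exact h ▸ norm_apply_le_of_positive T y

variable {S : StarSubalgebra ℂ A} [IsClosed (S : Set A)] {E : A →ₚ[ℂ] A}
  (hE : LinearMap.IsProj (Subalgebra.toSubmodule S.toSubalgebra) E)
include hE

lemma norm_exp_neg_conj_apply_exp_conj_le {a : A} (ha : a ∈ S) (ha' : IsSelfAdjoint a) (x : A)
    (t : ℂ) : ‖exp (-t • a) * E (exp (t • a) * x * exp (t • a)) * exp (-t • a)‖ ≤
      4 * ‖(1 : A)‖ * ‖x‖ := by
  let _ : NormedAlgebra ℚ A := .restrictScalars ℚ ℂ A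
  obtain ⟨r, s, rfl⟩ : ∃ r s : ℝ, t = r + s * Complex.I := ⟨t.re, t.im, (Complex.re_add_im t).symm⟩
  have h_selfAdjoint (r : ℝ) : IsSelfAdjoint (exp ((r : ℂ) • a)) :=
    (IsSelfAdjoint.smul (Complex.conj_ofReal r) ha').exp
  have h_mem : exp ((r : ℂ) • a) ∈ S :=
    exp_mem (R := ℂ) (inferInstanceAs (IsClosed (S : Set A))) (S.smul_mem ha _)
  have h_neg : -(r + s * Complex.I) = (-s : ℝ) * Complex.I + (-r : ℝ) := by push_cast; ring
  have h_inv : exp (((-r : ℝ) : ℂ) • a) * exp ((r : ℂ) • a) = 1 := by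
    simpa only [Complex.ofReal_neg, neg_neg] using exp_smul_mul_exp_neg_smul a (-r)
  have h_unital : exp (((-r : ℝ) : ℂ) • a) * E (exp ((r : ℂ) • a) * exp ((r : ℂ) • a)) *
      exp (((-r : ℝ) : ℂ) • a) = 1 := by
    rw [hE.map_id _ (S.mul_mem h_mem h_mem), ← mul_assoc, h_inv, one_mul, Complex.ofReal_neg,
      exp_smul_mul_exp_neg_smul]
  rw [h_neg, exp_add_smul_conj a x]
  rw [exp_add_smul_conj a _ ((-s : ℝ) * Complex.I), norm_exp_mul_I_smul_conj ha']
  have h := norm_conj_apply_conj_le E (h_selfAdjoint r) (h_selfAdjoint (-r))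
    (exp ((s * Complex.I) • a) * x * exp ((s * Complex.I) • a))
  rwa [h_unital, norm_exp_mul_I_smul_conj ha'] at h

/- The left-hand side is entire in `t`, and it is bounded because its real direction consists of
positive unital maps and its imaginary direction of unitaries. -/
lemma exp_neg_conj_apply_exp_conj {a : A} (ha : a ∈ S) (ha' : IsSelfAdjoint a) (x : A) (t : ℂ) :
    exp (-t • a) * E (exp (t • a) * x * exp (t • a)) * exp (-t • a) = E x := by
  let T : A →L[ℂ] A := ⟨E.toLinearMap, map_continuous E⟩
  let F : ℂ → A := fun t => exp (-t • a) * T (exp (t • a) * x * exp (t • a)) * exp (-t • a)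
  have h_exp : Differentiable ℂ fun t : ℂ => exp (t • a) := fun t =>
    (hasDerivAt_exp_smul_const a t).differentiableAt
  have h_exp_neg : Differentiable ℂ fun t : ℂ => exp (-t • a) := h_exp.comp differentiable_neg
  have hF : Differentiable ℂ F :=
    (h_exp_neg.mul (T.differentiable.comp ((h_exp.mul_const x).mul h_exp))).mul h_exp_neg
  have h_bounded : Bornology.IsBounded (Set.range F) :=
    isBounded_iff_forall_norm_le.2 ⟨_, Set.forall_mem_range.2
      (norm_exp_neg_conj_apply_exp_conj_le hE ha ha' x)⟩
  simpa [F, T] using hF.apply_eq_apply_of_bounded h_bounded t 0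

lemma map_mul_add_mul_of_isSelfAdjoint {a : A} (ha : a ∈ S) (ha' : IsSelfAdjoint a) (x : A) :
    E (a * x + x * a) = a * E x + E x * a := by
  let T : A →L[ℂ] A := ⟨E.toLinearMap, map_continuous E⟩
  have h_exp := hasDerivAt_exp_smul_zero a
  have h_exp_neg : HasDerivAt (fun t : ℂ => exp (-t • a)) (-a) 0 := by
    simpa only [smul_neg, neg_smul] using hasDerivAt_exp_smul_zero (-a)
  have h_inner : HasDerivAt (fun t : ℂ => E (exp (t • a) * x * exp (t • a)))
      (E (a * x + x * a)) 0 := by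
    have h := T.hasFDerivAt.comp_hasDerivAt (0 : ℂ) ((h_exp.mul_const x).mul h_exp)
    simpa [T, Function.comp_def] using! h
  have h_deriv := ((h_exp_neg.mul h_inner).mul h_exp_neg).unique
    ((hasDerivAt_const (0 : ℂ) (E x)).congr_of_eventuallyEq
      (.of_forall (exp_neg_conj_apply_exp_conj hE ha ha' x)))
  simp only [Pi.mul_apply, neg_zero, zero_smul, exp_zero, one_mul, mul_one, neg_mul,
    mul_neg] at h_deriv
  rw [← sub_eq_zero, ← h_deriv]
  abel

lemma map_mul_add_mul {a : A} (ha : a ∈ S) (x : A) : E (a * x + x * a) = a * E x + E x * a := by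
  obtain ⟨b, c, h_sum⟩ : ∃ b c : selfAdjoint S, (⟨a, ha⟩ : S) = b + Complex.I • (c : S) :=
    ⟨_, _, (realPart_add_I_smul_imaginaryPart _).symm⟩
  obtain rfl : a = (b : S) + Complex.I • ((c : S) : A) := congrArg Subtype.val h_sum
  have hb := map_mul_add_mul_of_isSelfAdjoint hE (b : S).2 (b.2.map S.subtype) x
  have hc := map_mul_add_mul_of_isSelfAdjoint hE (c : S).2 (c.2.map S.subtype) x
  have h_split : ((b : S) + Complex.I • ((c : S) : A)) * x +
      x * ((b : S) + Complex.I • ((c : S) : A)) =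
        ((b : S) * x + x * (b : S)) + Complex.I • (((c : S) : A) * x + x * (c : S)) := by
    simp only [add_mul, mul_add, smul_mul_assoc, mul_smul_comm, smul_add]
    abel
  rw [h_split, map_add, map_smul, hb, hc]
  simp only [add_mul, mul_add, smul_mul_assoc, mul_smul_comm, smul_add]
  abel

end JordanProjection

section TraceProjection

lemma eq_of_bounded_of_add_eq_two_nsmul {V : Type*} [NormedAddCommGroup V] [NormedSpace ℝ V]
    {g : ℕ → V} {C : ℝ} (h_bound : ∀ n, ‖g n‖ ≤ C) (h_mid : ∀ n, g (n + 2) + g n = 2 • g (n + 1)) :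
    g 1 = g 0 := by
  have h_linear (n : ℕ) : g (n + 1) - g n = g 1 - g 0 := by
    induction n with
    | zero => rfl
    | succ n ih => rw [← ih, sub_eq_sub_iff_add_eq_add, h_mid, two_nsmul]
  have h_arith (n : ℕ) : n • (g 1 - g 0) = g n - g 0 := by
    induction n with
    | zero => simp
    | succ n ih => rw [succ_nsmul, ih, ← h_linear n]; abel
  by_contra h_ne
  have h_pos : 0 < ‖g 1 - g 0‖ := norm_pos_iff.2 (sub_ne_zero.2 h_ne)
  obtain ⟨n, hn⟩ := exists_nat_gt ((C + C) / ‖g 1 - g 0‖)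
  rw [div_lt_iff₀ h_pos, ← nsmul_eq_mul, ← RCLike.norm_nsmul ℝ, h_arith] at hn
  exact hn.not_ge ((norm_sub_le _ _).trans (add_le_add (h_bound n) (h_bound 0)))

variable {A : Type*} [CStarAlgebra A] [PartialOrder A] [StarOrderedRing A]
  {S : StarSubalgebra ℂ A} [IsClosed (S : Set A)] {E : A →ₚ[ℂ] A}
  (hE : LinearMap.IsProj (Subalgebra.toSubmodule S.toSubalgebra) E)
include hE

lemma map_conj_add_map_conj {u v : A} (hu : u ∈ S) (hv : v ∈ S) (huv : u * v = 1)
    (hvu : v * u = 1) (x : A) :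
    E (v * x * u) + E (u * x * v) = v * E x * u + u * E x * v := by
  have h_expand (y : A) : u * (v * y + y * v) + (v * y + y * v) * u =
      v * y * u + u * y * v + (y + y) := by
    rw [mul_add, add_mul, ← mul_assoc u v, huv, one_mul, mul_assoc y v, hvu, mul_one, ← mul_assoc]
    abel
  have h := map_mul_add_mul hE hu (v * x + x * v)
  rw [map_mul_add_mul hE hv x, h_expand, h_expand, map_add, map_add, map_add] at h
  exact add_right_cancel h

variable {τ : A →L[ℂ] ℂ} (hτ : ∀ a ∈ S, ∀ b ∈ S, τ (a * b) = τ (b * a))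
include hτ

lemma trace_map_star_mul_mul_of_mem_unitary {u : A} (hu : u ∈ S) (hu' : u ∈ unitary A) (x : A) :
    τ (E (star u * x * u)) = τ (E x) := by
  let T : A →L[ℂ] ℂ := τ ∘L ⟨E.toLinearMap, map_continuous E⟩
  have hE' (y : A) : E y ∈ S := hE.map_mem y
  have h_mid (y : A) : T (star u * y * u) + T (u * y * star u) = 2 • T y := by
    have h := congrArg τ (map_conj_add_map_conj hE hu (star_mem hu)
      (Unitary.mul_star_self_of_mem hu') (Unitary.star_mul_self_of_mem hu') y)
    rw [map_add, map_add, hτ _ (mul_mem (star_mem hu) (hE' y)) _ hu,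
      hτ _ (mul_mem hu (hE' y)) _ (star_mem hu), ← mul_assoc, ← mul_assoc,
      Unitary.mul_star_self_of_mem hu', Unitary.star_mul_self_of_mem hu', one_mul] at h
    exact h.trans (two_nsmul _).symm
  have h_bound (n : ℕ) : ‖T (star (u ^ n) * x * u ^ n)‖ ≤ ‖T‖ * ‖x‖ := by
    refine (T.le_opNorm _).trans_eq ?_
    rw [CStarRing.norm_mul_mem_unitary _ (pow_mem hu' n),
      CStarRing.norm_mem_unitary_mul _ (Unitary.star_mem (pow_mem hu' n))]
  have h := eq_of_bounded_of_add_eq_two_nsmul h_bound fun n => by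
    rw [← h_mid]
    congr 2
    · simp only [pow_succ, star_mul, mul_assoc]
    · calc star (u ^ n) * x * u ^ n = u * star u * (star (u ^ n) * x * u ^ n) * (u * star u) := by
            rw [Unitary.mul_star_self_of_mem hu', one_mul, mul_one]
        _ = u * (star (u ^ (n + 1)) * x * u ^ (n + 1)) * star u := by
            rw [pow_succ, star_mul]
            simp only [mul_assoc]
  simpa [T] using h

lemma trace_map_mul_comm {a : A} (ha : a ∈ S) (x : A) : τ (E (x * a)) = τ (E (a * x)) := by
  have h_unitary : ∀ u ∈ unitary S, τ (E (x * u)) = τ (E (u * x)) := fun u hu => by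
    have hu' : (u : A) ∈ unitary A := Unitary.map_mem S.subtype hu
    have h := trace_map_star_mul_mul_of_mem_unitary hE hτ u.2 hu' (u * x)
    rwa [← mul_assoc, Unitary.star_mul_self_of_mem hu', one_mul] at h
  have h_span : (⟨a, ha⟩ : S) ∈ Submodule.span ℂ (unitary S : Set S) :=
    CStarAlgebra.span_unitary (A := S) ▸ Submodule.mem_top
  suffices ∀ b ∈ Submodule.span ℂ (unitary S : Set S), τ (E (x * b)) = τ (E (b * x)) from
    this _ h_span
  intro b hb
  induction hb using Submodule.span_induction with
  | mem u hu => exact h_unitary u hu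
  | zero => simp
  | add b c _ _ hb hc => simp [mul_add, add_mul, hb, hc]
  | smul r b _ hb => simp [hb]

lemma trace_map_mul {a : A} (ha : a ∈ S) (x : A) : τ (E (a * x)) = τ (a * E x) := by
  have h := congrArg τ (map_mul_add_mul hE ha x)
  rw [map_add, map_add, map_add, trace_map_mul_comm hE hτ ha x, hτ _ (hE.map_mem x) _ ha] at h
  linear_combination h / 2

lemma trace_map_star_mul_mul {a : A} (ha : a ∈ S) (x : A) :
    τ (E (star a * x * a)) = τ (star a * E x * a) := by
  have hx : E x ∈ S := hE.map_mem x
  rw [trace_map_mul_comm hE hτ ha, ← mul_assoc, trace_map_mul hE hτ (mul_mem ha (star_mem ha)),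
    hτ _ (mul_mem (star_mem ha) hx) _ ha, ← mul_assoc]

end TraceProjection

section InvariantMean

lemma eq_of_apply_self_eq {V : Type*} [AddCommGroup V] [Module ℂ V] {f g : V →ₗ⋆[ℂ] V →ₗ[ℂ] ℂ}
    (h : ∀ v, f v v = g v v) : f = g := by
  have h_alt : (f - g).IsAlt := fun v => by simp [h]
  refine sub_eq_zero.1 (LinearMap.ext₂ fun v w => ?_)
  have h_I := h_alt.neg (Complex.I • v) w
  rw [(f - g).map_smulₛₗ, map_smul, LinearMap.smul_apply, ← h_alt.neg v w, Complex.conj_I,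
    smul_eq_mul, smul_eq_mul] at h_I
  rw [LinearMap.zero_apply, LinearMap.zero_apply]
  linear_combination (-Complex.I / 2) * h_I + (f - g) v w * Complex.I_mul_I

lemma eq_of_le_of_map_one_eq {A : Type*} [CStarAlgebra A] [PartialOrder A] [StarOrderedRing A]
    {f g : A →ₗ[ℂ] ℂ} (h_le : ∀ x, 0 ≤ x → g x ≤ f x) (h_one : f 1 = g 1) : f = g := by
  refine LinearMap.ext_on CStarAlgebra.span_nonneg fun x (hx : 0 ≤ x) => ?_
  refine le_antisymm ?_ (h_le x hx)
  have h := h_le ((‖x‖ : ℂ) • 1 - x) <| sub_nonneg.2 <| by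
    simpa only [Algebra.algebraMap_eq_smul_one, Complex.coe_smul] using
      (IsSelfAdjoint.of_nonneg hx).le_algebraMap_norm_self
  rw [map_sub, map_sub, map_smul, map_smul, h_one] at h
  exact (sub_le_sub_iff_left _).1 h

variable {H H2 : Type*}
  [NormedAddCommGroup H] [InnerProductSpace ℂ H] [CompleteSpace H]
  [NormedAddCommGroup H2] [InnerProductSpace ℂ H2] [CompleteSpace H2]

instance isClosed_toStarSubalgebra (N : VonNeumannAlgebra H) :
    IsClosed (N.toStarSubalgebra : Set (B H)) := by
  change IsClosed (N : Set (B H))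
  rw [← N.centralizer_centralizer]
  exact Set.isClosed_centralizer _

namespace IsConditionalExpectation

variable {N : VonNeumannAlgebra H} {E : B H →ₗ[ℂ] B H} (hE : IsConditionalExpectation H N E)

/-- A conditional expectation as a bundled positive linear map. -/
def toPositiveLinearMap : B H →ₚ[ℂ] B H := .mk₀ E fun x hx =>
  (ContinuousLinearMap.nonneg_iff_isPositive _).2
    (hE.positive x ((ContinuousLinearMap.nonneg_iff_isPositive _).1 hx))

include hE

lemma continuous : Continuous E := map_continuous hE.toPositiveLinearMap

lemma trace_map_star_mul_mul {τ : B H →ₗ[ℂ] ℂ} (hτ : Continuous τ)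
    (h_tracial : ∀ a ∈ N, ∀ b ∈ N, τ (a * b) = τ (b * a)) {a : B H} (ha : a ∈ N) (x : B H) :
    τ (E (star a * x * a)) = τ (star a * E x * a) :=
  LCQGNote.trace_map_star_mul_mul (S := N.toStarSubalgebra) (E := hE.toPositiveLinearMap)
    (τ := ⟨τ, hτ⟩) ⟨hE.mem_range, hE.fixes⟩ h_tracial ha x

end IsConditionalExpectation

/-- The matrix coefficients `slice X a c` as a sesquilinear map in `a` and `c`. -/
def HilbertTensor.sesqSlice {H₁ H₂ K : Type*} [NormedAddCommGroup H₁] [InnerProductSpace ℂ H₁]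
    [NormedAddCommGroup H₂] [InnerProductSpace ℂ H₂] [CompleteSpace H₂]
    [NormedAddCommGroup K] [InnerProductSpace ℂ K] [CompleteSpace K]
    (P : HilbertTensor H₁ H₂ K) (X : B K) : H₁ →ₗ⋆[ℂ] H₁ →ₗ[ℂ] B H₂ :=
  LinearMap.mk₂'ₛₗ _ _ (P.slice X)
    (fun a b c => by simp only [slice, bra, map_add, ContinuousLinearMap.add_comp])
    (fun r a c => by simp only [slice, bra, map_smul, map_smulₛₗ, ContinuousLinearMap.smul_comp])
    (fun a b c => by simp only [slice, map_add, ContinuousLinearMap.comp_add])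
    (fun r a c => by simp only [slice, map_smul, ContinuousLinearMap.comp_smul, RingHom.id_apply])

omit [CompleteSpace H] in
lemma isPositive_of_inner_nonneg {T : B H} (h : ∀ v, 0 ≤ ⟪v, T v⟫) : T.IsPositive := by
  refine (ContinuousLinearMap.isPositive_iff_complex T).2 fun v => ?_
  have hv : 0 ≤ ⟪T v, v⟫ := by
    rw [← inner_conj_symm]
    exact star_nonneg_iff.2 (h v)
  exact ⟨(Complex.eq_re_of_ofReal_le hv).symm, (Complex.nonneg_iff.1 hv).1⟩

lemma LCQG.hasSum_inner_slice_Delta (Q : LCQG H H2) {ι : Type*} (e : HilbertBasis ι ℂ H)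
    (x : B H) (k v : H) :
    HasSum (fun i => ⟪v, (star (Q.square.slice Q.W (e i) k) * x * Q.square.slice Q.W (e i) k) v⟫)
      ⟪v, Q.square.slice (Q.Delta x) k k v⟫ := by
  rw [HilbertTensor.inner_slice, Delta_eq]
  simpa only [mul_apply_eq_comp, star_inner_right, HilbertTensor.bra_ampR,
    HilbertTensor.slice_apply] using Q.square.hasSum_inner_bra e (Q.W (Q.square.tmul k v))
      (Q.square.ampR x (Q.W (Q.square.tmul k v)))

namespace DiscreteKacQG

variable (Q : DiscreteKacQG H H2) {E : B H →ₗ[ℂ] B H} (hE : IsConditionalExpectation H Q.Mhat E)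
include hE

lemma phihat_map_nonneg {x : B H} (hx : x.IsPositive) : 0 ≤ Q.phihat (E x) :=
  Q.phihat_state.2 _ (hE.mem_range x) (hE.positive x hx)

lemma inner_mul_phihat_map_le {x : B H} (hx : 0 ≤ x) (k : H) :
    ⟪k, k⟫ * Q.phihat (E x) ≤ Q.phihat (E (Q.square.slice (Q.Delta x) k k)) := by
  obtain ⟨w, e, -⟩ := exists_hilbertBasis ℂ H
  let u (i : w) : B H := Q.square.slice Q.W (e i) k
  have h_trace (i : w) : Q.phihat (star (u i) * E x * u i) = Q.phihat (E (star (u i) * x * u i)) :=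
    (hE.trace_map_star_mul_mul Q.phihat_normal.continuous Q.phihat_tracial
      (Q.slice_W_mem (e i) k) x).symm
  refine hasSum_le_of_sum_le (Q.hasSum_phihat_star_mul_mul_slice_W e k (hE.mem_range x)) fun F => ?_
  have h_nonneg : (Q.square.slice (Q.Delta x) k k - ∑ i ∈ F, star (u i) * x * u i).IsPositive := by
    refine isPositive_of_inner_nonneg fun v => ?_
    rw [sub_apply, inner_sub_right, sub_nonneg, sum_apply, inner_sum]
    refine sum_le_hasSum F (fun i _ => ?_) (Q.hasSum_inner_slice_Delta e x k v)
    rw [mul_apply_eq_comp, mul_apply_eq_comp, star_inner_right]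
    exact ((ContinuousLinearMap.nonneg_iff_isPositive _).1 hx).inner_nonneg_right _
  have h := Q.phihat_map_nonneg hE h_nonneg
  rw [map_sub, map_sub, sub_nonneg, map_sum, map_sum] at h
  exact (Finset.sum_congr rfl fun i _ => h_trace i).trans_le h

/- The inequality `⟪k, k⟫ m ≤ m ∘ (ω_k ⊗ id)Δ` on positive operators is an equality because both
sides agree at `1`. -/
lemma phihat_map_slice_Delta_self (x : B H) (k : H) :
    Q.phihat (E (Q.square.slice (Q.Delta x) k k)) = ⟪k, k⟫ * Q.phihat (E x) := by
  let S : B H →ₗ[ℂ] B H := Q.sliceL (vecFunctional H k k) ∘ₗ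
    LinearMap.mulLeftRight ℂ (star Q.W, Q.W) ∘ₗ Q.square.ampR.toAlgHom.toLinearMap
  have hS (x : B H) : S x = Q.square.slice (Q.Delta x) k k := by
    rw [Q.Delta_eq, ← Q.sliceL_vecFunctional]
    rfl
  have h_one : S 1 = ⟪k, k⟫ • (1 : B H) := by
    rw [hS, Q.Delta_eq, map_one, mul_one, Q.W_unitary_l, ← map_one Q.square.ampR,
      HilbertTensor.slice_ampR]
  have h := eq_of_le_of_map_one_eq (f := Q.phihat ∘ₗ E ∘ₗ S) (g := ⟪k, k⟫ • (Q.phihat ∘ₗ E))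
    (fun x hx => (Q.inner_mul_phihat_map_le hE hx k).trans_eq (by rw [← hS]; rfl))
    (by simp only [LinearMap.comp_apply, LinearMap.smul_apply, h_one, map_smul])
  exact hS x ▸ DFunLike.congr_fun h x

lemma phihat_map_slice_Delta (x : B H) (a c : H) :
    Q.phihat (E (Q.square.slice (Q.Delta x) a c)) = ⟪a, c⟫ * Q.phihat (E x) := by
  let f : H →ₗ⋆[ℂ] H →ₗ[ℂ] ℂ := (Q.square.sesqSlice (Q.Delta x)).compr₂ₛₗ (Q.phihat ∘ₗ E)
  have h : f = Q.phihat (E x) • innerₛₗ ℂ := eq_of_apply_self_eq fun k =>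
    (Q.phihat_map_slice_Delta_self hE x k).trans (mul_comm _ _)
  exact (LinearMap.congr_fun₂ h a c).trans (mul_comm _ _)

lemma phihat_map_sliceL_Delta (x : B H) {ω : B H →ₗ[ℂ] ℂ} (hω : IsNormalFunctional H ω) :
    Q.phihat (E (Q.sliceL ω (Q.Delta x))) = ω 1 * Q.phihat (E x) := by
  obtain ⟨ξ, η, hξ, hη, h⟩ := hω
  have h_slice := (Q.hasSum_slice hξ hη h (Q.Delta x)).map (Q.phihat ∘ₗ E)
    (Q.phihat_normal.continuous.comp hE.continuous)
  refine (h_slice.congr_fun fun n => ?_).unique ((h 1).mul_right (Q.phihat (E x)))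
  exact (Q.phihat_map_slice_Delta hE x (η n) (ξ n)).symm

end DiscreteKacQG

end InvariantMean

theorem haar_comp_expectation_is_mean_general (Q : DiscreteKacQG H H2)
    (E : B H →ₗ[ℂ] B H) (hE : IsConditionalExpectation H Q.Mhat E) :
    Q.phihat (E 1) = 1 ∧ (∀ x : B H, x.IsPositive → 0 ≤ Q.phihat (E x)) ∧
      ∀ (x : B H) (ω : B H →ₗ[ℂ] ℂ), IsNormalFunctional H ω →
        Q.phihat (E (Q.sliceL ω (Q.Delta x))) = ω 1 * Q.phihat (E x) :=
  ⟨by rw [hE.unital, Q.phihat_state.1], fun _ hx => Q.phihat_map_nonneg hE hx,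
    fun x _ hω => Q.phihat_map_sliceL_Delta hE x hω⟩

/-- Let `𝔾` be a discrete quantum group of Kac type and `E` a conditional expectation of
`B(L²(𝔾))` onto `L∞(𝔾̂)`.  Then `m := φ̂ ∘ E|_{L∞(𝔾)}` is a left-invariant mean on
`L∞(𝔾)`, where `φ̂` is the (tracial) Haar state of the compact dual `𝔾̂`. -/
theorem haar_comp_expectation_is_mean (Q : DiscreteKacQG H H2)
    (E : B H →ₗ[ℂ] B H) (hE : IsConditionalExpectation H Q.Mhat E) :
    Q.toLCQG.IsLeftInvariantMean (Q.phihat ∘ₗ E) := by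
  obtain ⟨h_one, h_pos, h_inv⟩ := haar_comp_expectation_is_mean_general H H2 Q E hE
  exact ⟨⟨h_one, fun x _ => h_pos x⟩, fun x _ => h_inv x⟩

end LCQGNote
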